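/- For every fixed ε > 0 there is a constant C(ε) such that, with the notation of the context, for every real R > 0 the number of triples (g, q, κ), where (q, κ) is an admissible pair and g = (x₁, x₂, y₁, y₂) ∈ ℤ⁴ satisfies a₁x₁²y₁³ + a₂x₂²y₂³ ≠ 0, the congruences (c1), (c2), (c3), (c4), and max(|x₁|/X₁, |x₂|/X₂, |y₁|/Y₁, |y₂|/Y₂) ≤ R, is at most C(ε) · (Y₁Y₂)^{−3/2} Y₃^{−3} R⁷ B^{2+ε}. -/

import Mathlib

/-- The set `S₀(B)` of sextuples `(x₁, x₂, x₃, y₁, y₂, y₃)` of positive integers (encoded as a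
pair of functions `Fin 3 → ℤ`) such that `Xᵢ/2 < xᵢ ≤ Xᵢ` and `Yᵢ/2 < yᵢ ≤ Yᵢ`, the equation
`a₁x₁²y₁³ + a₂x₂²y₂³ + a₃x₃²y₃³ = 0` holds, `gcd(x₁y₁, x₂y₂, x₃y₃) = 1`,
`gcd(a₁a₂a₃, x₁x₂x₃y₁y₂y₃) = 1`, and `a₁y₁, a₂y₂, a₃y₃` are all squarefree. -/
def S0 (a : Fin 3 → ℤ) (X Y : Fin 3 → ℝ) : Set ((Fin 3 → ℤ) × (Fin 3 → ℤ)) :=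
  {p | (∀ i, 0 < p.1 i) ∧ (∀ i, 0 < p.2 i) ∧
    (∀ i, X i / 2 < (p.1 i : ℝ) ∧ (p.1 i : ℝ) ≤ X i) ∧
    (∀ i, Y i / 2 < (p.2 i : ℝ) ∧ (p.2 i : ℝ) ≤ Y i) ∧
    a 0 * p.1 0 ^ 2 * p.2 0 ^ 3 + a 1 * p.1 1 ^ 2 * p.2 1 ^ 3 +
      a 2 * p.1 2 ^ 2 * p.2 2 ^ 3 = 0 ∧
    Int.gcd (p.1 0 * p.2 0) (Int.gcd (p.1 1 * p.2 1) (p.1 2 * p.2 2)) = 1 ∧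
    Int.gcd (a 0 * a 1 * a 2) (p.1 0 * p.1 1 * p.1 2 * p.2 0 * p.2 1 * p.2 2) = 1 ∧
    (∀ i, Squarefree (a i * p.2 i))}

/-- The congruences (c1), (c2), (c3), (c4). -/
def Congs (a₁ a₂ q κ x₁ x₂ y₁ y₂ : ℤ) : Prop :=
  (q ∣ a₂ * x₁ - κ ^ 3 * a₁ * x₂) ∧
  (q ∣ κ ^ 2 * a₁ * y₁ + a₂ * y₂) ∧
  (q ∣ κ ^ 2 * a₁ * x₂ * y₁ + a₂ * x₂ * y₂) ∧
  (q ^ 2 ∣ 2 * a₂ * x₁ * y₁ + κ ^ 3 * a₁ * x₂ * y₁ + 3 * κ * a₂ * x₂ * y₂) ∧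
  (q ^ 3 ∣ 5 * κ ^ 2 * a₁ * a₂ * x₁ * y₁ + a₂ ^ 2 * x₁ * y₂ +
    κ ^ 5 * a₁ ^ 2 * x₂ * y₁ + 5 * κ ^ 3 * a₁ * a₂ * x₂ * y₂)

/-- The curve `v² + k v = u³`. -/
def Ek {K : Type*} [Field K] (k : K) : WeierstrassCurve.Affine K := ⟨0, 0, k, 0, 0⟩

namespace EkLem

open WeierstrassCurve.Affine

set_option linter.unusedSectionVars false

variable {K : Type*} [Field K]

lemma equation_iff' (k u v : K) : (Ek k).Equation u v ↔ v ^ 2 + k * v = u ^ 3 := by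
  rw [WeierstrassCurve.Affine.equation_iff]; simp [Ek]

lemma ns_of_eq {k u v : K} (hk : k ≠ 0) (h3 : (3 : K) ≠ 0) (h : v ^ 2 + k * v = u ^ 3) :
    (Ek k).Nonsingular u v := by
  rw [WeierstrassCurve.Affine.nonsingular_iff]
  refine ⟨(equation_iff' k u v).2 h, ?_⟩
  by_contra hcon
  push Not at hcon
  simp only [Ek] at hcon
  obtain ⟨h1, h2⟩ := hcon
  have hu : u = 0 := by
    have : 3 * u ^ 2 = 0 := by linear_combination -h1
    simpa [h3] using this
  subst hu
  have h4 : k ^ 2 = 0 := by linear_combination (-4) * h + (2 * v + k) * h2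
  exact hk (by simpa using h4)

lemma eq_of_ns {k u v : K} (h : (Ek k).Nonsingular u v) : v ^ 2 + k * v = u ^ 3 :=
  (equation_iff' k u v).1 h.1

lemma ns_smul {k u v w : K} (hw : w ^ 3 = 1) (h : (Ek k).Nonsingular u v) :
    (Ek k).Nonsingular (w * u) v := by
  have hw0 : w ≠ 0 := by rintro rfl; simp at hw
  rw [WeierstrassCurve.Affine.nonsingular_iff] at h ⊢
  refine ⟨(equation_iff' k _ v).2 ?_, ?_⟩
  · rw [mul_pow, hw, one_mul]; exact (equation_iff' k u v).1 h.1
  · rcases h.2 with h2 | h2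
    · left
      simp only [Ek] at h2 ⊢
      intro h3
      apply h2
      have : w ^ 2 * (3 * u ^ 2) = 0 := by linear_combination -h3
      have h5 : 3 * u ^ 2 = 0 := by
        rcases mul_eq_zero.1 this with h6 | h6
        · exact absurd (pow_eq_zero_iff (two_ne_zero) |>.1 h6) hw0
        · exact h6
      linear_combination -h5
    · right
      simpa [Ek] using h2

/-- multiplication of the `u`-coordinate by a cube root of unity -/
def om (k w : K) (hw : w ^ 3 = 1) : (Ek k).Point → (Ek k).Point
  | .zero => .zero
  | .some u v h => .some (w * u) v (ns_smul hw h)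

variable [DecidableEq K]

lemma some_congr {k u v u' v' : K} {h : (Ek k).Nonsingular u v} (hu : u = u') (hv : v = v') :
    ∃ h', (Point.some u v h : (Ek k).Point) = Point.some u' v' h' := by
  subst hu; subst hv; exact ⟨h, rfl⟩

lemma some_eq {k u v u' v' : K} {h : (Ek k).Nonsingular u v} {h' : (Ek k).Nonsingular u' v'}
    (hu : u = u') (hv : v = v') :
    (Point.some u v h : (Ek k).Point) = Point.some u' v' h' := by
  subst hu; subst hv; rfl

lemma om_add (k w : K) (hw : w ^ 3 = 1) (P Q : (Ek k).Point) :
    om k w hw (P + Q) = om k w hw P + om k w hw Q := by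
  have hw0 : w ≠ 0 := by rintro rfl; simp at hw
  rcases P with _ | ⟨u₁, v₁, h₁⟩
  · change om k w hw (0 + Q) = 0 + om k w hw Q
    rw [zero_add, zero_add]
  rcases Q with _ | ⟨u₂, v₂, h₂⟩
  · change om k w hw (_ + 0) = om k w hw _ + 0
    rw [add_zero, add_zero]
  by_cases hxy : u₁ = u₂ ∧ v₁ = (Ek k).negY u₂ v₂
  · rw [Point.add_of_Y_eq hxy.1 hxy.2]
    simp only [om]
    rw [Point.add_of_Y_eq (by rw [hxy.1]) (by rw [hxy.2]; simp [negY, Ek])]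
    rfl
  · have hxy' : ¬ (w * u₁ = w * u₂ ∧ v₁ = (Ek k).negY (w * u₂) v₂) := by
      rintro ⟨h, h'⟩
      exact hxy ⟨mul_left_cancel₀ hw0 h, by rw [h']; simp [negY, Ek]⟩
    rw [Point.add_some hxy]
    simp only [om]
    rw [Point.add_some hxy']
    have hsl : w * (Ek k).slope (w * u₁) (w * u₂) v₁ v₂ = (Ek k).slope u₁ u₂ v₁ v₂ := by
      by_cases hu : u₁ = u₂
      · have hv : v₁ ≠ (Ek k).negY u₂ v₂ := fun h => hxy ⟨hu, h⟩
        have hv' : v₁ ≠ (Ek k).negY (w * u₂) v₂ := fun h => hxy' ⟨by rw [hu], h⟩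
        rw [slope_of_Y_ne hu hv, slope_of_Y_ne (by rw [hu]) hv']
        simp only [negY, Ek]
        rw [← mul_div_assoc]
        congr 1
        · linear_combination (3 * u₁ ^ 2) * hw
        · ring
      · rw [slope_of_X_ne hu, slope_of_X_ne (fun h => hu (mul_left_cancel₀ hw0 h)), ← mul_sub]
        have : u₁ - u₂ ≠ 0 := sub_ne_zero.2 hu
        field_simp
    have hsl2 : (Ek k).slope (w * u₁) (w * u₂) v₁ v₂ = w ^ 2 * (Ek k).slope u₁ u₂ v₁ v₂ := by
      rw [← hsl]; linear_combination (-(Ek k).slope (w * u₁) (w * u₂) v₁ v₂) * hw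
    rw [eq_comm]
    apply some_eq
    · rw [hsl2]
      generalize (Ek k).slope u₁ u₂ v₁ v₂ = m
      simp only [addX, Ek]
      linear_combination (w * m ^ 2) * hw
    · rw [hsl2]
      generalize (Ek k).slope u₁ u₂ v₁ v₂ = m
      simp only [addY, negAddY, negY, addX, Ek]
      linear_combination (-m ^ 3 * (w ^ 3 + 1) +
        m * (2 * u₁ + u₂)) * hw

/-- `om` as a homomorphism -/
def omHom (k w : K) (hw : w ^ 3 = 1) : (Ek k).Point →+ (Ek k).Point :=
  AddMonoidHom.mk' (om k w hw) (om_add k w hw)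

lemma cube_one {w : K} (hw : w ^ 2 + w + 1 = 0) : w ^ 3 = 1 := by
  linear_combination (w - 1) * hw

lemma cube_one' {w : K} (hw : w ^ 2 + w + 1 = 0) : (w ^ 2) ^ 3 = 1 := by
  linear_combination (w - 1) * (w ^ 3 + 1) * hw

/-- The endomorphism `ω - ω²`. -/
def phi (k w : K) (hw : w ^ 2 + w + 1 = 0) : (Ek k).Point →+ (Ek k).Point :=
  omHom k w (cube_one hw) - omHom k (w ^ 2) (cube_one' hw)

lemma phi_some {k w : K} (hw : w ^ 2 + w + 1 = 0) (h3 : (3 : K) ≠ 0) {u v : K}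
    (h : (Ek k).Nonsingular u v) (hu : u ≠ 0) :
    ∃ u' v' h', phi k w hw (.some u v h) = .some u' v' h' ∧
      u' * (3 * u ^ 2) = -(u ^ 3 + k ^ 2) ∧
      v' * ((2 * w + 1) * 3 * u ^ 3) = -(v - w ^ 2 * k) ^ 3 ∧
      (v' + k) * ((2 * w + 1) * 3 * u ^ 3) = -(v - w * k) ^ 3 := by
  have he := eq_of_ns h
  have hs : (2 * w + 1) ^ 2 = -3 := by linear_combination 4 * hw
  have hs0 : (2 * w + 1) ≠ 0 := by intro h0; rw [h0] at hs; apply h3; linear_combination hs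
  have hne : w * u ≠ w ^ 2 * u := by
    intro h0
    have h1 : w * u * (1 - w) = 0 := by linear_combination h0
    have hw0 : w ≠ 0 := by rintro rfl; simp at hw
    rcases mul_eq_zero.1 h1 with h2 | h2
    · exact (mul_ne_zero hw0 hu) h2
    · apply h3; have : w = 1 := by linear_combination -h2
      rw [this] at hw; linear_combination hw
  have hval : phi k w hw (.some u v h) =
      Point.some _ _ (ns_smul (cube_one hw) h) - Point.some _ _ (ns_smul (cube_one' hw) h) := rfl
  rw [hval, sub_eq_add_neg, Point.neg_some, Point.add_of_X_ne hne]
  refine ⟨_, _, _, rfl, ?_⟩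
  rw [slope_of_X_ne hne]
  simp only [addY, negAddY, negY, addX, Ek]
  have hden : w * u - w ^ 2 * u = (2 * w + 1) * u := by linear_combination (-u) * hw
  have hl : (v - (-v - 0 * (w ^ 2 * u) - k)) / (w * u - w ^ 2 * u)
      = (2 * v + k) / ((2 * w + 1) * u) := by
    rw [hden]; congr 1; ring
  rw [hl]
  set l := (2 * v + k) / ((2 * w + 1) * u) with hldef
  have hl1 : l * ((2 * w + 1) * u) = 2 * v + k := by
    rw [hldef]; field_simp
  clear_value l
  have hl2 : l ^ 2 * (3 * u ^ 2) = - (2 * v + k) ^ 2 := by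
    rw [← hl1]; linear_combination (l ^ 2 * u ^ 2) * hs
  have hx : (l ^ 2 - w * u - w ^ 2 * u) * (3 * u ^ 2) = -(u ^ 3 + k ^ 2) := by
    linear_combination hl2 - 3 * u ^ 3 * hw - 4 * he
  have hy : (-(l * ((l ^ 2 - w * u - w ^ 2 * u) - w * u) + v) - k) * ((2 * w + 1) * 3 * u ^ 3)
      = -(v - w ^ 2 * k) ^ 3 := by
    have h1 : l * ((l ^ 2 - w * u - w ^ 2 * u) - w * u) * ((2 * w + 1) * 3 * u ^ 3)
        = (2 * v + k) * (-(u ^ 3 + k ^ 2) - 3 * w * u ^ 3) := by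
      rw [← hx, ← hl1]; ring
    have h2 : (-(l * ((l ^ 2 - w * u - w ^ 2 * u) - w * u) + v) - k) * ((2 * w + 1) * 3 * u ^ 3)
        = - ((2 * v + k) * (-(u ^ 3 + k ^ 2) - 3 * w * u ^ 3))
          - (v + k) * ((2 * w + 1) * 3 * u ^ 3) := by
      rw [← h1]; ring
    rw [h2, ← he]
    have hw3 := cube_one hw
    linear_combination (-3 * k * v ^ 2) * hw + (3 * k ^ 2 * v * w - k ^ 3 * (w ^ 3 + 1)) * hw3
  refine ⟨by linear_combination hx, by linear_combination hy, ?_⟩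
  have hw3 := cube_one hw
  linear_combination hy + (-3 * k * (2 * w + 1)) * he +
    (3 * k * v ^ 2 + 3 * k ^ 2 * v) * hw + (-3 * k ^ 2 * v * w + k ^ 3 * w ^ 3) * hw3

end EkLem

namespace EkLem

open WeierstrassCurve.Affine

lemma mem_range_of_cube {K : Type*} [Field K] [DecidableEq K] {k w : K}
    (hw : w ^ 2 + w + 1 = 0) (h3 : (3 : K) ≠ 0) (hk : k ≠ 0) {u v s : K}
    (h : (Ek k).Nonsingular u v) (hs : s ≠ 0) (hv : v = s ^ 3) :
    ∃ W, phi k w hw W = .some u v h := by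
  have he := eq_of_ns h
  subst hv
  obtain ⟨x, rfl⟩ : ∃ x, u = x * s := ⟨u / s, by field_simp⟩
  have hk1 : k = x ^ 3 - s ^ 3 := by
    have : s ^ 3 * (s ^ 3 + k - x ^ 3) = 0 := by linear_combination he
    rcases mul_eq_zero.1 this with h0 | h0
    · exact absurd (pow_eq_zero_iff three_ne_zero |>.1 h0) hs
    · linear_combination h0
  have hU : -(x ^ 2 + x * s + s ^ 2) ≠ 0 := by
    intro h0; apply hk; rw [hk1]; linear_combination (-(x - s)) * h0
  set U := -(x ^ 2 + x * s + s ^ 2) with hUd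
  have hns : (Ek k).Nonsingular U (w ^ 2 * k + (2 * w + 1) * s * U) := by
    apply ns_of_eq hk h3
    have h1 : (w ^ 2 * k + (2 * w + 1) * s * U) = w * k + (2 * w + 1) * x * U := by
      rw [hk1, hUd]
      linear_combination (x ^ 3 - s ^ 3) * hw
    have h2 : ((2 * w + 1) * s * U) * ((2 * w + 1) * x * U) = -3 * x * s * U ^ 2 := by
      linear_combination (4 * x * s * U ^ 2) * hw
    set V := (w ^ 2 * k + (2 * w + 1) * s * U) with hV
    have h4 : (V - w ^ 2 * k) * (V - w * k) = -3 * x * s * U ^ 2 := by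
      rw [← h2]; rw [show V - w ^ 2 * k = (2 * w + 1) * s * U by rw [hV]; ring,
        show V - w * k = (2 * w + 1) * x * U by rw [h1]; ring]
    have h5 : U ^ 2 * (U + 3 * x * s) = - k ^ 2 := by
      rw [hk1, hUd]; ring
    linear_combination h4 - h5 + (V * k - (w - 1) * k ^ 2) * hw
  obtain ⟨u', v', h', hphi, e1, e2, e3⟩ := phi_some hw h3 hns hU
  refine ⟨_, hphi.trans ?_⟩
  · skip
    have hs3 : (2 * w + 1) ^ 2 = -3 := by linear_combination 4 * hw
    have hs0 : (2 * w + 1) ≠ 0 := by intro h0; rw [h0] at hs3; apply h3; linear_combination hs3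
    apply some_eq
    · have : (3 * U ^ 2) ≠ 0 := mul_ne_zero h3 (pow_ne_zero _ hU)
      apply mul_right_cancel₀ this
      rw [e1, hk1, hUd]; ring
    · have : (2 * w + 1) * 3 * U ^ 3 ≠ 0 := mul_ne_zero (mul_ne_zero hs0 h3) (pow_ne_zero _ hU)
      apply mul_right_cancel₀ this
      rw [e2]
      linear_combination (-(2 * w + 1) * s ^ 3 * U ^ 3) * hs3

lemma sub_mem_range {K : Type*} [Field K] [DecidableEq K] {k w : K}
    (hw : w ^ 2 + w + 1 = 0) (h3 : (3 : K) ≠ 0) (hk : k ≠ 0) {u₁ v₁ u₂ v₂ D s₁ s₂ : K}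
    (h₁ : (Ek k).Nonsingular u₁ v₁) (h₂ : (Ek k).Nonsingular u₂ v₂)
    (hu₁ : u₁ ≠ 0) (hu₂ : u₂ ≠ 0) (hv₁ : v₁ = D * s₁ ^ 3) (hv₂ : v₂ = D * s₂ ^ 3) :
    ∃ W, phi k w hw W = Point.some u₁ v₁ h₁ - Point.some u₂ v₂ h₂ := by
  have e₁ := eq_of_ns h₁
  have e₂ := eq_of_ns h₂
  have hv10 : v₁ ≠ 0 := by rintro h0; apply hu₁; rw [h0] at e₁; simpa using e₁.symm
  have hv20 : v₂ ≠ 0 := by rintro h0; apply hu₂; rw [h0] at e₂; simpa using e₂.symm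
  have hD : D ≠ 0 := by rintro rfl; apply hv10; simpa using hv₁
  have hs1 : s₁ ≠ 0 := by rintro rfl; apply hv10; simpa using hv₁
  have hs2 : s₂ ≠ 0 := by rintro rfl; apply hv20; simpa using hv₂
  by_cases hu : u₁ = u₂
  · by_cases hv : v₁ = v₂
    · exact ⟨0, by rw [map_zero, eq_comm, sub_eq_zero]; exact some_eq hu hv⟩
    · have h12 : v₁ = -k - v₂ := by
        have : (v₁ - v₂) * (v₁ + v₂ + k) = 0 := by
          rw [hu] at e₁; linear_combination e₁ - e₂
        rcases mul_eq_zero.1 this with h0 | h0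
        · exact absurd (sub_eq_zero.1 h0) hv
        · linear_combination h0
      have hpr : v₁ * v₂ = - u₂ ^ 3 := by rw [h12]; linear_combination -e₂
      -- D is a cube
      have hDc : D = (- D * s₁ * s₂ / u₂) ^ 3 := by
        rw [div_pow, eq_div_iff (pow_ne_zero _ hu₂)]
        have : u₂ ^ 3 = - (D * s₁ ^ 3 * (D * s₂ ^ 3)) := by rw [← hv₁, ← hv₂, hpr]; ring
        rw [this]; ring
      obtain ⟨W, hW⟩ := mem_range_of_cube (w := w) hw h3 hk h₁
        (s := (- D * s₁ * s₂ / u₂) * s₁) (by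
          refine mul_ne_zero (div_ne_zero ?_ hu₂) hs1
          exact mul_ne_zero (mul_ne_zero (neg_ne_zero.2 hD) hs1) hs2)
        (by rw [mul_pow, ← hDc, hv₁])
      refine ⟨W + W, ?_⟩
      rw [map_add, hW, sub_eq_add_neg]
      congr 1
      rw [Point.neg_some]
      apply some_eq hu
      simp only [negY, Ek]; rw [h12]; ring
  · rw [sub_eq_add_neg, Point.neg_some, Point.add_of_X_ne hu]
    set l := (Ek k).slope u₁ u₂ v₁ ((Ek k).negY u₂ v₂) with hl
    have hl1 : l * (u₁ - u₂) = v₁ + k + v₂ := by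
      rw [hl, slope_of_X_ne hu, div_mul_cancel₀ _ (sub_ne_zero.2 hu)]
      simp only [negY, Ek]; ring
    clear_value l
    generalize_proofs hns
    revert hns
    have hex : ∀ u v, u = l ^ 2 - u₁ - u₂ → v = - (l * (u - u₁) + v₁) - k →
        ∀ hns : (Ek k).Nonsingular u v, ∃ W, phi k w hw W = Point.some u v hns := by
      intro u v hu' hv' hns
      have e := eq_of_ns hns
      set n := v₁ - l * u₁ with hn
      have hv2' : -k - v₂ = l * u₂ + n := by rw [hn]; linear_combination hl1
      have hv1' : v₁ = l * u₁ + n := by rw [hn]; ring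
      have hv' : -k - v = l * u + n := by rw [hn, hv']; ring
      clear_value n
      -- elementary symmetric relations
      have q1 : (l * u₁ + n) ^ 2 + k * (l * u₁ + n) = u₁ ^ 3 := by rw [← hv1']; exact e₁
      have q2 : (l * u₂ + n) ^ 2 + k * (l * u₂ + n) = u₂ ^ 3 := by
        rw [← hv2']; linear_combination e₂
      have d1 : u₁ - u₂ ≠ 0 := sub_ne_zero.2 hu
      have s2 : u₁ ^ 2 + u₁ * u₂ + u₂ ^ 2 = l ^ 2 * (u₁ + u₂) + 2 * l * n + k * l := by
        apply mul_left_cancel₀ d1; linear_combination q2 - q1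
      have s3 : u₁ * u₂ * u = n ^ 2 + k * n := by
        rw [hu']; linear_combination (-u₁) * s2 - q1
      have s2' : u₁ * u₂ + u * (u₁ + u₂) = - (2 * l * n + k * l) := by
        rw [hu']; linear_combination -s2
      have hprod : v₁ * (-k - v₂) * (-k - v) = n ^ 3 := by
        rw [hv2', hv', hv1']
        linear_combination l ^ 3 * s3 + l ^ 2 * n * s2' + l * n ^ 2 * hu'
      have hv2n : -k - v₂ ≠ 0 := by
        intro h0; apply hu₂
        have : u₂ ^ 3 = 0 := by rw [← e₂]; linear_combination (-v₂) * h0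
        simpa using this
      have hv2e : (-k - v₂) * v₂ = - u₂ ^ 3 := by linear_combination -e₂
      have hve : (-k - v) * v = - u ^ 3 := by linear_combination -e
      by_cases hu0 : u = 0
      · -- k is a cube
        have hkc : ∃ c, k = c ^ 3 := by
          have hv0 : v = 0 ∨ v = -k := by
            rw [hu0] at hve
            have : (-k - v) * v = 0 := by rw [hve]; ring
            rcases mul_eq_zero.1 this with h0 | h0
            · right; linear_combination -h0
            · left; exact h0
          rcases hv0 with hv0 | hv0
          · have hn0 : n ^ 3 = k * (D * s₁ ^ 3) * u₂ ^ 3 / (D * s₂ ^ 3) := by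
              rw [eq_div_iff (by rw [← hv₂]; exact hv20), ← hprod, hv0, ← hv₁, ← hv₂]
              linear_combination (-k * v₁) * hv2e
            refine ⟨n * s₂ / (s₁ * u₂), ?_⟩
            rw [div_pow, mul_pow n, hn0]
            field_simp
          · have hn0 : n = 0 := by
              have : n ^ 3 = 0 := by rw [← hprod, hv0]; ring
              simpa using this
            have hl0 : l ≠ 0 := by
              rintro h0; apply hv10; rw [hv1', hn0, h0]; ring
            have h6 : u₁ * u₂ = -(k * l) := by
              rw [hu0, hn0] at s2'; linear_combination s2'
            have h7 : v₁ * (-k - v₂) = - k * l ^ 3 := by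
              rw [hv1', hv2', hn0]; linear_combination l ^ 2 * h6
            have h8 : (D * s₁ ^ 3) * u₂ ^ 3 = k * l ^ 3 * (D * s₂ ^ 3) := by
              rw [← hv₁, ← hv₂]; linear_combination (v₁) * hv2e - v₂ * h7
            refine ⟨s₁ * u₂ / (s₂ * l), ?_⟩
            rw [div_pow, eq_div_iff (by positivity)]
            apply mul_left_cancel₀ hD
            linear_combination -h8
        obtain ⟨c, hc⟩ := hkc
        have hc0 : -c ≠ 0 := by
          intro h0; apply hk; rw [hc, neg_eq_zero.1 h0]; ring
        have hnsk : (Ek k).Nonsingular 0 (-k) := ns_of_eq hk h3 (by ring)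
        obtain ⟨W, hW⟩ := mem_range_of_cube (w := w) hw h3 hk hnsk hc0 (by rw [hc]; ring)
        have hv0 : v = 0 ∨ v = -k := by
          rw [hu0] at hve
          have : (-k - v) * v = 0 := by rw [hve]; ring
          rcases mul_eq_zero.1 this with h0 | h0
          · right; linear_combination -h0
          · left; exact h0
        rcases hv0 with hv0 | hv0
        · refine ⟨-W, ?_⟩
          rw [map_neg, hW, Point.neg_some]
          apply some_eq hu0.symm
          rw [hv0]; simp [negY, Ek]
        · exact ⟨W, by rw [hW]; exact some_eq hu0.symm hv0.symm⟩
      · have hvn0 : v ≠ 0 := by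
          rintro h0; apply hu0
          have : u ^ 3 = 0 := by rw [← e, h0]; ring
          simpa using this
        have hkv0 : -k - v ≠ 0 := by
          rintro h0; apply hu0
          have : u ^ 3 = 0 := by linear_combination hve - v * h0
          simpa using this
        have hn0 : n ≠ 0 := by
          rintro rfl
          have : v₁ * (-k - v₂) * (-k - v) = 0 := by rw [hprod]; ring
          exact (mul_ne_zero (mul_ne_zero hv10 hv2n) hkv0) this
        apply mem_range_of_cube (w := w) hw h3 hk hns (s := s₁ * u₂ * u / (s₂ * n))
        · positivity
        · rw [div_pow, eq_div_iff (by positivity)]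
          apply mul_left_cancel₀ hD
          have : D * s₁ ^ 3 * u₂ ^ 3 * u ^ 3 = (D * s₂ ^ 3) * v * n ^ 3 := by
            rw [← hv₁, ← hv₂, ← hprod]
            linear_combination (v₁ * u₂ ^ 3) * hve  - (v₁ * (-k - v) * v) * hv2e
          linear_combination -this
    intro hns
    refine hex _ _ ?_ ?_ hns
    · rw [← hl]; simp only [addX, Ek]; ring
    · rw [← hl]; simp only [addX, addY, negAddY, negY, Ek]; ring

end EkLem

namespace EkLem

lemma pigeon_descent {G ι : Type*} [AddCommGroup G] [DecidableEq G] [DecidableEq ι] (φ : G →+ G)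
    (f : G → ι) (T : Finset ι) (hT : ∀ g, f g ∈ T)
    (hf : ∀ g g', f g = f g' → ∃ W, φ W = g - g') (S : Finset G) (n : ℕ) :
    ∃ S' ⊆ S, S.card ≤ T.card ^ n * S'.card ∧
      ∀ P ∈ S', ∀ P' ∈ S', ∃ W, (φ^[n]) W = P - P' := by
  induction n with
  | zero => exact ⟨S, Finset.Subset.refl _, by simp, fun P _ P' _ => ⟨P - P', rfl⟩⟩
  | succ n ih =>
    obtain ⟨S', hS', hc, hd⟩ := ih
    rcases S'.eq_empty_or_nonempty with h0 | ⟨P0, hP0⟩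
    · refine ⟨∅, Finset.empty_subset _, ?_, by simp⟩
      rw [h0] at hc; simpa using hc
    · have hW : ∀ P, ∃ W, P ∈ S' → (φ^[n]) W = P - P0 := by
        intro P
        by_cases hP : P ∈ S'
        · obtain ⟨W, hW⟩ := hd P hP P0 hP0
          exact ⟨W, fun _ => hW⟩
        · exact ⟨0, fun h => absurd h hP⟩
      choose W hW using hW
      have hTne : T.Nonempty := ⟨_, hT 0⟩
      obtain ⟨y, hy, hy2⟩ := Finset.exists_max_image T
        (fun y => (S'.filter (fun P => f (W P) = y)).card) hTne
      refine ⟨S'.filter (fun P => f (W P) = y), (Finset.filter_subset _ _).trans hS', ?_, ?_⟩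
      · have := Finset.card_eq_sum_card_fiberwise (s := S') (t := T) (f := fun P => f (W P))
          (fun P _ => hT _)
        have h2 : S'.card ≤ T.card * (S'.filter (fun P => f (W P) = y)).card := by
          rw [this, ← smul_eq_mul]
          exact Finset.sum_le_card_nsmul _ _ _ (fun x hx => hy2 x hx)
        calc S.card ≤ T.card ^ n * S'.card := hc
          _ ≤ T.card ^ n * (T.card * (S'.filter (fun P => f (W P) = y)).card) := by gcongr
          _ = _ := by ring
      · intro P hP P' hP'
        rw [Finset.mem_filter] at hP hP'
        obtain ⟨V, hV⟩ := hf (W P) (W P') (by rw [hP.2, hP'.2])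
        refine ⟨V, ?_⟩
        rw [Function.iterate_succ, Function.comp, hV]
        have : (φ^[n]) (W P - W P') = (φ^[n]) (W P) - (φ^[n]) (W P') := by
          exact iterate_map_sub φ n _ _
        rw [this, hW P hP.1, hW P' hP'.1]; abel

open UniqueFactorizationMonoid in
lemma cubefree_decomp {O : Type*} [CommRing O] [IsDomain O] [IsPrincipalIdealRing O]
    (α : O) (hα : α ≠ 0) : ∃ d c, α = d * c ^ 3 ∧ ∀ p, Prime p → ¬ p ^ 3 ∣ d := by
  induction α using (wellFounded_dvdNotUnit (α := O)).induction with
  | _ α ih =>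
    by_cases h : ∃ p, Prime p ∧ p ^ 3 ∣ α
    · obtain ⟨p, hp, β, hβ⟩ := h
      have hβ0 : β ≠ 0 := by rintro rfl; apply hα; rw [hβ]; simp
      obtain ⟨d, c, h1, h2⟩ := ih β ⟨hβ0, p ^ 3, fun hu => hp.not_unit
        ((isUnit_pow_iff three_ne_zero).1 hu), by rw [hβ]; ring⟩ hβ0
      exact ⟨d, p * c, by rw [hβ, h1]; ring, h2⟩
    · push Not at h
      exact ⟨α, 1, by ring, h⟩

open UniqueFactorizationMonoid in
lemma class_exists {O : Type*} [CommRing O] [IsDomain O] [IsPrincipalIdealRing O]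
    (k α β γ : O) (hk : k ≠ 0) (hα : α ≠ 0) (hβ : β ≠ 0) (hco : IsCoprime α β)
    (hγ : γ ≠ 0)
    (h : α * β * (α + k * β) = γ ^ 3) :
    ∃ D b c : O, D ∣ k ^ 2 ∧ b ≠ 0 ∧ α * b ^ 3 = D * c ^ 3 * β := by
  classical
  letI : StrongNormalizationMonoid O := UniqueFactorizationMonoid.strongNormalizationMonoid
  have hco2 : IsCoprime β (α * (α + k * β)) := by
    apply IsCoprime.mul_right hco.symm
    have := (IsCoprime.add_mul_right_right (hco.symm) k)
    simpa [mul_comm] using this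
  obtain ⟨b, e, hbe⟩ := exists_associated_pow_of_mul_eq_pow' (k := 3) (c := γ) hco2
    (by rw [← h]; ring)
  have hb0 : b ≠ 0 := by rintro rfl; apply hβ; rw [← hbe]; simp
  obtain ⟨d, c, hdc, hd⟩ := cubefree_decomp α hα
  have hd0 : d ≠ 0 := by rintro rfl; apply hα; rw [hdc]; simp
  have hc0 : c ≠ 0 := by rintro rfl; apply hα; rw [hdc]; simp
  have hα2 : α + k * β ≠ 0 := by
    intro h0; apply hγ; rw [h0, mul_zero] at h; simpa using h.symm
  have hdk : d ∣ k ^ 2 := by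
    rw [dvd_iff_normalizedFactors_le_normalizedFactors hd0 (pow_ne_zero _ hk),
      Multiset.le_iff_count]
    intro p
    by_cases hp : p ∈ normalizedFactors d
    · have hpp : Prime p := prime_of_normalized_factor p hp
      have hle : (normalizedFactors d).count p ≤ 2 := by
        by_contra hcon
        push Not at hcon
        apply hd p hpp
        have h3 : Multiset.replicate 3 p ≤ normalizedFactors d := by
          rw [← Multiset.le_count_iff_replicate_le]; exact hcon
        rw [dvd_iff_normalizedFactors_le_normalizedFactors (pow_ne_zero _ hpp.ne_zero) hd0,
          normalizedFactors_pow, normalizedFactors_irreducible hpp.irreducible,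
          normalize_normalized_factor p hp, Multiset.nsmul_singleton]
        exact h3
      have hpk : p ∣ k := by
        by_contra hpk
        have hpd : p ∣ d := dvd_of_mem_normalizedFactors hp
        have hpα : p ∣ α := by rw [hdc]; exact hpd.mul_right _
        have hpβ : ¬ p ∣ β := fun h => hpp.not_unit (hco.isUnit_of_dvd' hpα h)
        have hps : ¬ p ∣ α + k * β := by
          intro h
          rcases hpp.dvd_or_dvd ((dvd_add_right hpα).1 h) with h | h
          · exact hpk h
          · exact hpβ h
        have hcount := congrArg (fun x => (normalizedFactors x).count p) h

        rw [normalizedFactors_mul (mul_ne_zero hα hβ) hα2, normalizedFactors_mul hα hβ,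
          normalizedFactors_pow, Multiset.count_add, Multiset.count_add, Multiset.count_nsmul,
          Multiset.count_eq_zero_of_notMem (fun h => hpβ (dvd_of_mem_normalizedFactors h)),
          Multiset.count_eq_zero_of_notMem (fun h => hps (dvd_of_mem_normalizedFactors h)),
          hdc, normalizedFactors_mul hd0 (pow_ne_zero _ hc0), normalizedFactors_pow,
          Multiset.count_add, Multiset.count_nsmul] at hcount
        have h1 := Multiset.one_le_count_iff_mem.2 hp
        try simp only [smul_eq_mul] at hcount
        omega
      rw [normalizedFactors_pow, Multiset.count_nsmul]
      have : p ∈ normalizedFactors k := by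
        rw [mem_normalizedFactors_iff' hk]
        exact ⟨hpp.irreducible, normalize_normalized_factor p hp, hpk⟩
      have := Multiset.one_le_count_iff_mem.2 this
      try simp only [smul_eq_mul]
      omega
    · rw [Multiset.count_eq_zero_of_notMem hp]; exact Nat.zero_le _
  refine ⟨d * ↑e⁻¹, b, c, ?_, hb0, ?_⟩
  · exact (Units.mul_right_dvd).2 hdk
  · rw [← hbe, hdc]
    have : (↑e⁻¹ : O) * e = 1 := Units.inv_mul e
    linear_combination (-d * c ^ 3 * b ^ 3) * this

/-- A submultiplicative size function. -/
structure NormData (O : Type*) [CommRing O] where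
  N : O →*₀ ℝ
  one_le : ∀ x, x ≠ 0 → 1 ≤ N x
  add_le : ∀ x y, N (x + y) ≤ N x + N y
  c : ℝ
  fin : ∀ T : ℝ, {x | N x ≤ T}.Finite
  count : ∀ T : ℝ, 1 ≤ T → ({x | N x ≤ T}.ncard : ℝ) ≤ c * T ^ 2

lemma NormData.isUnit_of {O : Type*} [CommRing O] [IsDomain O] (d : NormData O) {x : O}
    (hx : d.N x = 1) : IsUnit x := by
  have hx0 : x ≠ 0 := by rintro rfl; simp at hx
  have hmem : ∀ n : ℕ, x ^ n ∈ {x | d.N x ≤ 1} := by intro n; simp [hx]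
  obtain ⟨i, _, j, _, hij, he⟩ := Set.infinite_univ.exists_ne_map_eq_of_mapsTo
    (s := (Set.univ : Set ℕ)) (f := fun n => x ^ n) (fun n _ => hmem n) (d.fin 1)
  wlog hlt : i < j generalizing i j
  · exact this j trivial i trivial hij.symm he.symm (by omega)

  obtain ⟨m, rfl⟩ := Nat.exists_eq_add_of_lt hlt
  have : x ^ i * (x ^ (m + 1)) = x ^ i * 1 := by
    rw [mul_one, ← pow_add]; exact he.symm
  have h1 := mul_left_cancel₀ (pow_ne_zero _ hx0) this
  exact IsUnit.of_mul_eq_one (x ^ m) (by rw [← h1]; ring)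

lemma NormData.exists_gap {O : Type*} [CommRing O] [IsDomain O] (d : NormData O) :
    ∃ η : ℝ, 1 < η ∧ ∀ x, x ≠ 0 → ¬ IsUnit x → η ≤ d.N x := by
  classical
  set F := (d.fin 2).toFinset.filter (fun x => 1 < d.N x) with hF
  rcases F.eq_empty_or_nonempty with h | h
  · refine ⟨2, by norm_num, fun x hx hu => ?_⟩
    by_contra hlt
    push Not at hlt
    have : x ∈ F := by
      rw [hF, Finset.mem_filter, Set.Finite.mem_toFinset]
      exact ⟨hlt.le, lt_of_le_of_ne (d.one_le x hx) (fun h => hu (d.isUnit_of h.symm))⟩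
    rw [h] at this; simp at this
  · obtain ⟨y, hy, hy2⟩ := F.exists_min_image d.N h
    refine ⟨min 2 (d.N y), lt_min (by norm_num) (Finset.mem_filter.1 hy).2, fun x hx hu => ?_⟩
    rcases le_or_gt (d.N x) 2 with h2 | h2
    · refine (min_le_right _ _).trans (hy2 x ?_)
      rw [hF, Finset.mem_filter, Set.Finite.mem_toFinset]
      exact ⟨h2, lt_of_le_of_ne (d.one_le x hx) (fun h => hu (d.isUnit_of h.symm))⟩
    · exact (min_le_left _ _).trans h2.le

end EkLem

namespace EkLem

lemma NormData.unit_N {O : Type*} [CommRing O] [IsDomain O] (d : NormData O) (e : Oˣ) :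
    d.N e = 1 := by
  have h1 := d.one_le e e.ne_zero
  have h2 := d.one_le (e⁻¹ : Oˣ) (Units.ne_zero _)
  have h3 : d.N e * d.N (e⁻¹ : Oˣ) = 1 := by rw [← map_mul]; simp
  nlinarith

lemma NormData.le_of_dvd {O : Type*} [CommRing O] [IsDomain O] (d : NormData O) {x y : O}
    (hy : y ≠ 0) (h : x ∣ y) : d.N x ≤ d.N y := by
  obtain ⟨z, rfl⟩ := h
  have hz := d.one_le z (right_ne_zero_of_mul hy)
  have hx := d.one_le x (left_ne_zero_of_mul hy)
  rw [map_mul]; nlinarith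

open UniqueFactorizationMonoid in
lemma NormData.divisor_bound {O : Type*} [CommRing O] [IsDomain O] [IsPrincipalIdealRing O]
    (d : NormData O) (δ : ℝ) (hδ : 0 < δ) :
    ∃ C : ℝ, 1 ≤ C ∧ ∀ k : O, k ≠ 0 → {x | x ∣ k}.Finite ∧
      ({x | x ∣ k}.ncard : ℝ) ≤ C * (d.N k) ^ δ := by
  classical
  letI : StrongNormalizationMonoid O := UniqueFactorizationMonoid.strongNormalizationMonoid
  obtain ⟨η, hη, hgap⟩ := d.exists_gap
  have hlog : 0 < Real.log η := Real.log_pos hη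
  set A : ℝ := max 1 (1 / (δ * Real.log η)) with hA
  have hA1 : 1 ≤ A := le_max_left _ _
  have hA2 : 1 ≤ A * (δ * Real.log η) := by
    have : 1 / (δ * Real.log η) ≤ A := le_max_right _ _
    rwa [div_le_iff₀ (by positivity)] at this
  set F := (d.fin ((2 : ℝ) ^ (1 / δ))).toFinset with hF
  set U := (d.fin 1).toFinset with hU
  refine ⟨A ^ F.card * (U.card + 1), ?_, fun k hk => ?_⟩
  · have := one_le_pow₀ (n := F.card) hA1
    have h2 : (1 : ℝ) ≤ U.card + 1 := by linarith [Nat.cast_nonneg (α := ℝ) U.card]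
    nlinarith
  set m := normalizedFactors k with hm
  have hsub : {x | x ∣ k} ⊆
      (((Finset.Iic m) ×ˢ U).image (fun s => s.1.prod * s.2) : Finset O) := by
    intro x hx
    have hx' : x ∣ k := hx
    have hx0 : x ≠ 0 := ne_zero_of_dvd_ne_zero hk hx'
    obtain ⟨e, he⟩ := prod_normalizedFactors hx0
    rw [Finset.mem_coe, Finset.mem_image]
    refine ⟨(normalizedFactors x, e), ?_, he⟩
    rw [Finset.mem_product, Finset.mem_Iic, hU, Set.Finite.mem_toFinset]
    exact ⟨(dvd_iff_normalizedFactors_le_normalizedFactors hx0 hk).1 hx', (d.unit_N e).le⟩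
  refine ⟨(Finset.finite_toSet _).subset hsub, ?_⟩
  have hcard : {x | x ∣ k}.ncard ≤ (Finset.Iic m).card * U.card := by
    refine (Set.ncard_le_ncard hsub (Finset.finite_toSet _)).trans ?_
    rw [Set.ncard_coe_finset]
    exact Finset.card_image_le.trans (Finset.card_product _ _).le
  have hIic : ((Finset.Iic m).card : ℝ) ≤ A ^ F.card * (d.N k) ^ δ := by
    rw [Multiset.card_Iic]
    push_cast
    have hbd : ∀ p ∈ m.toFinset, ((m.count p : ℝ) + 1) ≤
        (if p ∈ F then A else 1) * ((d.N p) ^ (m.count p)) ^ δ := by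
      intro p hp
      rw [Multiset.mem_toFinset] at hp
      have hpp := prime_of_normalized_factor p hp
      have hNη := hgap p hpp.ne_zero hpp.not_unit
      have hNpos : 0 < d.N p := by linarith
      generalize m.count p = e
      have hcomm : ((d.N p) ^ e) ^ δ = ((d.N p) ^ δ) ^ e := by
        rw [← Real.rpow_natCast, ← Real.rpow_mul hNpos.le, mul_comm, Real.rpow_mul hNpos.le,
          Real.rpow_natCast]
      split_ifs with hpF
      · have h1 : 1 + e * (δ * Real.log η) ≤ ((d.N p) ^ e) ^ δ := by
          rw [hcomm]
          have h2 : Real.exp (δ * Real.log η) ≤ (d.N p) ^ δ := by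
            rw [mul_comm, ← Real.rpow_def_of_pos (by linarith)]
            exact Real.rpow_le_rpow (by linarith) hNη hδ.le
          calc 1 + e * (δ * Real.log η) ≤ Real.exp (e * (δ * Real.log η)) := by
                linarith [Real.add_one_le_exp (e * (δ * Real.log η))]
            _ = Real.exp (δ * Real.log η) ^ e := by rw [← Real.exp_nat_mul]
            _ ≤ _ := by gcongr
        have he : (0 : ℝ) ≤ e := Nat.cast_nonneg e
        calc (e : ℝ) + 1 ≤ A * (1 + e * (δ * Real.log η)) := by nlinarith
          _ ≤ _ := by gcongr
      · have h1 : (2 : ℝ) ^ (1 / δ) < d.N p := by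
          by_contra hcon
          apply hpF; rw [hF, Set.Finite.mem_toFinset]; exact not_lt.1 hcon
        have h2 : (2 : ℝ) ≤ (d.N p) ^ δ := by
          calc (2 : ℝ) = ((2 : ℝ) ^ (1 / δ)) ^ δ := by
                rw [← Real.rpow_mul (by norm_num), one_div, inv_mul_cancel₀ hδ.ne', Real.rpow_one]
            _ ≤ _ := Real.rpow_le_rpow (by positivity) h1.le hδ.le
        rw [one_mul, hcomm]
        calc (e : ℝ) + 1 ≤ 2 ^ e := by exact_mod_cast Nat.lt_two_pow_self
          _ ≤ _ := by gcongr
    refine (Finset.prod_le_prod (fun i _ => by positivity) hbd).trans ?_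
    rw [Finset.prod_mul_distrib]
    have hN0 : ∀ p, 0 ≤ d.N p := by
      intro p
      rcases eq_or_ne p 0 with rfl | hp
      · simp
      · linarith [d.one_le p hp]
    have e1 : ∏ p ∈ m.toFinset, (if p ∈ F then A else 1) ≤ A ^ F.card := by
      rw [Finset.prod_ite]
      simp only [Finset.prod_const, one_pow, mul_one]
      apply pow_le_pow_right₀ hA1
      apply Finset.card_le_card
      intro x hx; exact (Finset.mem_filter.1 hx).2
    have e2 : ∏ p ∈ m.toFinset, ((d.N p) ^ (m.count p)) ^ δ = (d.N k) ^ δ := by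
      rw [Real.finsetProd_rpow _ _ (fun i _ => pow_nonneg (hN0 i) _)]
      congr 1
      rw [← Finset.prod_multiset_map_count, ← map_multiset_prod]
      obtain ⟨e, he⟩ := prod_normalizedFactors hk
      rw [← he, map_mul, d.unit_N, mul_one]
    rw [e2]
    gcongr
    exact Real.rpow_nonneg (hN0 k) _
  have hN1 : 0 ≤ (d.N k) ^ δ := Real.rpow_nonneg (by linarith [d.one_le k hk]) _
  calc ({x | x ∣ k}.ncard : ℝ) ≤ ((Finset.Iic m).card : ℝ) * U.card := by exact_mod_cast hcard
    _ ≤ (A ^ F.card * (d.N k) ^ δ) * (U.card + 1) := by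
        gcongr; linarith
    _ = _ := by ring

end EkLem

namespace EkLem

section heights

variable {O : Type*} [CommRing O] [IsDomain O] [IsPrincipalIdealRing O]
  {K : Type*} [Field K] [Algebra O K] [IsFractionRing O K]

/-- `x` is a quotient of two elements of size at most `T`. -/
def Ht (d : NormData O) (K : Type*) [Field K] [Algebra O K] (T : ℝ) (x : K) : Prop :=
  ∃ α β : O, β ≠ 0 ∧ x * algebraMap O K β = algebraMap O K α ∧ d.N α ≤ T ∧ d.N β ≤ T

lemma NormData.nonneg (d : NormData O) (x : O) : 0 ≤ d.N x := by
  rcases eq_or_ne x 0 with rfl | hp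
  · simp
  · linarith [d.one_le x hp]

lemma NormData.neg_eq (d : NormData O) (x : O) : d.N (-x) = d.N x := by
  have h := d.unit_N (-1 : Oˣ)
  have : -x = ((-1 : Oˣ) : O) * x := by simp
  rw [this, map_mul, h, one_mul]

lemma NormData.sub_le (d : NormData O) (x y : O) : d.N (x - y) ≤ d.N x + d.N y := by
  rw [sub_eq_add_neg, ← d.neg_eq y]; exact d.add_le _ _

lemma Ht.mono {d : NormData O} {T T' : ℝ} {x : K} (h : Ht d K T x) (hT : T ≤ T') :
    Ht d K T' x := by
  obtain ⟨α, β, h0, h1, h2, h3⟩ := h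
  exact ⟨α, β, h0, h1, h2.trans hT, h3.trans hT⟩

lemma Ht.add {d : NormData O} {T₁ T₂ : ℝ} {x y : K} (h : Ht d K T₁ x) (h' : Ht d K T₂ y) :
    Ht d K (2 * T₁ * T₂) (x + y) := by
  obtain ⟨α, β, h0, h1, h2, h3⟩ := h
  obtain ⟨α', β', h0', h1', h2', h3'⟩ := h'
  have n1 := d.nonneg α
  have n2 := d.one_le β h0
  have n1' := d.nonneg α'
  have n2' := d.one_le β' h0'
  have hT1 : 0 ≤ T₁ := by linarith
  have hT2 : 0 ≤ T₂ := by linarith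
  refine ⟨α * β' + α' * β, β * β', mul_ne_zero h0 h0', ?_, ?_, ?_⟩
  · push_cast [map_mul, map_add]; rw [← h1, ← h1']; ring
  · refine (d.add_le _ _).trans ?_
    rw [map_mul, map_mul]
    have := mul_le_mul h2 h3' (by linarith) hT1
    have := mul_le_mul h2' h3 (by linarith) hT2
    linarith
  · rw [map_mul]
    have := mul_le_mul h3 h3' (by linarith) hT1
    have : 0 ≤ T₁ * T₂ := by positivity
    linarith

lemma Ht.mul {d : NormData O} {T₁ T₂ : ℝ} {x y : K} (h : Ht d K T₁ x) (h' : Ht d K T₂ y) :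
    Ht d K (T₁ * T₂) (x * y) := by
  obtain ⟨α, β, h0, h1, h2, h3⟩ := h
  obtain ⟨α', β', h0', h1', h2', h3'⟩ := h'
  have n1 := d.nonneg α
  have n2 := d.one_le β h0
  have n1' := d.nonneg α'
  have n2' := d.one_le β' h0'
  have hT1 : 0 ≤ T₁ := by linarith
  refine ⟨α * α', β * β', mul_ne_zero h0 h0', ?_, ?_, ?_⟩
  · push_cast [map_mul, map_add]; rw [← h1, ← h1']; ring
  · rw [map_mul]; exact mul_le_mul h2 h2' (by linarith) hT1
  · rw [map_mul]; exact mul_le_mul h3 h3' (by linarith) hT1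

lemma Ht.of_int {d : NormData O} {T : ℝ} (α : O) (h : d.N α ≤ T) (hT : 1 ≤ T) :
    Ht d K T (algebraMap O K α) :=
  ⟨α, 1, one_ne_zero, by simp, h, by simpa using hT⟩

lemma Ht.neg {d : NormData O} {T : ℝ} {x : K} (h : Ht d K T x) : Ht d K T (-x) := by
  obtain ⟨α, β, h0, h1, h2, h3⟩ := h
  exact ⟨-α, β, h0, by rw [map_neg, ← h1]; ring, by rwa [d.neg_eq], h3⟩

lemma Ht.one_le {d : NormData O} {T : ℝ} {x : K} (h : Ht d K T x) : 1 ≤ T := by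
  obtain ⟨α, β, h0, h1, h2, h3⟩ := h
  exact (d.one_le β h0).trans h3

lemma Ht.inv {d : NormData O} {T : ℝ} {x : K} (h : Ht d K T x) : Ht d K T x⁻¹ := by
  rcases eq_or_ne x 0 with rfl | hx
  · simpa using h
  obtain ⟨α, β, h0, h1, h2, h3⟩ := h
  have hb : algebraMap O K β ≠ 0 := by
    rwa [Ne, map_eq_zero_iff _ (IsFractionRing.injective O K)]
  refine ⟨β, α, ?_, ?_, h3, h2⟩
  · rintro rfl; rw [map_zero] at h1; exact (mul_ne_zero hx hb) h1
  · rw [← h1]; field_simp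

lemma ht_count (d : NormData O) (T : ℝ) (hT : 1 ≤ T) :
    {x : K | Ht d K T x}.Finite ∧ ({x : K | Ht d K T x}.ncard : ℝ) ≤ (d.c * T ^ 2) ^ 2 := by
  classical
  set F := (d.fin T).toFinset with hF
  have hFc : (F.card : ℝ) ≤ d.c * T ^ 2 := by
    have := d.count T hT
    rwa [Set.ncard_eq_toFinset_card _ (d.fin T)] at this
  have hsub : {x : K | Ht d K T x} ⊆
      ((F ×ˢ F).image (fun s => algebraMap O K s.1 / algebraMap O K s.2) : Finset K) := by
    rintro x ⟨α, β, h0, h1, h2, h3⟩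
    rw [Finset.mem_coe, Finset.mem_image]
    refine ⟨(α, β), ?_, ?_⟩
    · rw [Finset.mem_product, hF, Set.Finite.mem_toFinset, Set.Finite.mem_toFinset]
      exact ⟨h2, h3⟩
    · have hb : algebraMap O K β ≠ 0 := by
        rwa [Ne, map_eq_zero_iff _ (IsFractionRing.injective O K)]
      simp only
      rw [← h1]; field_simp
  refine ⟨(Finset.finite_toSet _).subset hsub, ?_⟩
  have h1 := (Set.ncard_le_ncard hsub (Finset.finite_toSet _))
  rw [Set.ncard_coe_finset] at h1
  have h2 := h1.trans (Finset.card_image_le.trans (Finset.card_product _ _).le)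
  calc (({x : K | Ht d K T x}.ncard : ℕ) : ℝ) ≤ F.card * F.card := by exact_mod_cast h2
    _ = (F.card : ℝ) ^ 2 := by ring
    _ ≤ _ := by gcongr

/-- coprime representatives -/
lemma exists_reduced (x : K) : ∃ p r : O, r ≠ 0 ∧ IsCoprime p r ∧
    x * algebraMap O K r = algebraMap O K p := by
  obtain ⟨p, r, h1, h2⟩ := IsFractionRing.exists_reduced_fraction (A := O) x
  have hr : (r : O) ≠ 0 := nonZeroDivisors.ne_zero r.2
  refine ⟨p, r, hr, ?_, ?_⟩
  · exact (isRelPrime_iff_isCoprime).1 h1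
  · rw [← h2]; exact IsLocalization.mk'_spec K p r

lemma Ht.reduced {d : NormData O} {T : ℝ} {x : K} (h : Ht d K T x) :
    ∃ p r : O, r ≠ 0 ∧ IsCoprime p r ∧ x * algebraMap O K r = algebraMap O K p ∧
      d.N p ≤ T ∧ d.N r ≤ T := by
  obtain ⟨α, β, h0, h1, h2, h3⟩ := h
  obtain ⟨p, r, hr, hco, hx⟩ := exists_reduced (O := O) x
  have hinj := IsFractionRing.injective O K
  have key : α * r = p * β := by
    apply hinj; rw [map_mul, map_mul, ← h1, ← hx]; ring
  have hrβ : r ∣ β := hco.symm.dvd_of_dvd_mul_left ⟨α, by rw [← key]; ring⟩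
  obtain ⟨g, rfl⟩ := hrβ
  have hαp : α = p * g := by
    apply mul_right_cancel₀ hr; rw [key]; ring
  have hg : g ≠ 0 := right_ne_zero_of_mul h0
  have := d.one_le g hg
  have := d.nonneg p
  have := d.nonneg r
  rw [hαp, map_mul] at h2
  rw [map_mul] at h3
  exact ⟨p, r, hr, hco, hx, by nlinarith, by nlinarith⟩

lemma ht_descent (d : NormData O) {w : O} (hw : w ^ 2 + w + 1 = 0) (h3 : (2 * w + 1) ≠ 0)
    {T : ℝ} (hT : 1 ≤ T) {x x' : K} (hx' : Ht d K (T ^ 3) x')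
    (h : x' * (x - algebraMap O K w) ^ 3 = (x' + 1) * (x - algebraMap O K w ^ 2) ^ 3) :
    Ht d K (4 * (d.N (2 * w + 1)) ^ 5 * T) x := by
  obtain ⟨α, β, hβ, hco', hx'e, hα, hβT⟩ := hx'.reduced
  obtain ⟨p, r, hr, hco, hx⟩ := exists_reduced (O := O) x
  have hinj := IsFractionRing.injective O K
  set A := p - w ^ 2 * r with hA
  set B := p - w * r with hB
  have key : α * B ^ 3 = (α + β) * A ^ 3 := by
    apply hinj
    rw [hA, hB]
    simp only [map_mul, map_pow, map_add, map_sub]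
    rw [← hx, ← hx'e]
    linear_combination (algebraMap O K β * (algebraMap O K r) ^ 3) * h
  have hco2 : IsCoprime α (α + β) := by
    have := (IsCoprime.add_mul_left_right hco' 1)
    simpa [add_comm] using this
  obtain ⟨s, t, hst⟩ := hco2
  set z := s * A ^ 3 + t * B ^ 3 with hz
  have hAz : A ^ 3 = α * z := by
    rw [hz]; linear_combination (-A ^ 3) * hst - t * key
  have hBz : B ^ 3 = (α + β) * z := by
    rw [hz]; linear_combination (-B ^ 3) * hst + s * key
  obtain ⟨s', t', hst'⟩ := hco
  have e1 : (2 * w + 1) * r = A - B := by rw [hA, hB]; linear_combination r * hw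
  have e2 : (2 * w + 1) * p = w * A - w ^ 2 * B := by
    rw [hA, hB]; linear_combination p * hw
  have hzθ : z ∣ (2 * w + 1) ^ 5 := by
    have e3 : (2 * w + 1) = (s' * w + t') * A + (-s' * w ^ 2 - t') * B := by
      linear_combination (-(2 * w + 1)) * hst' + s' * e2 + t' * e1
    rw [e3]
    generalize (s' * w + t') = x
    generalize (-s' * w ^ 2 - t') = y
    have : (x * A + y * B) ^ 5 = A ^ 3 * (x ^ 5 * A ^ 2 + 5 * x ^ 4 * y * A * B
      + 10 * x ^ 3 * y ^ 2 * B ^ 2) + B ^ 3 * (10 * x ^ 2 * y ^ 3 * A ^ 2 + 5 * x * y ^ 4 * A * B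
      + y ^ 5 * B ^ 2) := by ring
    rw [this]
    exact dvd_add (Dvd.dvd.mul_right ⟨α, by rw [hAz]; ring⟩ _)
      (Dvd.dvd.mul_right ⟨α + β, by rw [hBz]; ring⟩ _)
  set τ := d.N (2 * w + 1) with hτ
  have hτ1 : 1 ≤ τ := d.one_le _ h3
  have hzN : d.N z ≤ τ ^ 5 := by
    have := d.le_of_dvd (pow_ne_zero 5 h3) hzθ
    rwa [map_pow] at this
  have hτ5 : 1 ≤ τ ^ 5 := one_le_pow₀ hτ1
  have hA' : d.N A ≤ 2 * τ ^ 5 * T := by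
    apply le_of_pow_le_pow_left₀ three_ne_zero (by positivity)
    rw [← map_pow, hAz, map_mul]
    calc d.N α * d.N z ≤ T ^ 3 * τ ^ 5 := mul_le_mul hα hzN (d.nonneg _) (by positivity)
      _ ≤ T ^ 3 * (2 * τ ^ 5) ^ 3 := by
        gcongr
        have : (1 : ℝ) ≤ (τ ^ 5) ^ 2 := one_le_pow₀ hτ5
        nlinarith
      _ = _ := by ring
  have hB' : d.N B ≤ 2 * τ ^ 5 * T := by
    apply le_of_pow_le_pow_left₀ three_ne_zero (by positivity)
    rw [← map_pow, hBz, map_mul]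
    calc d.N (α + β) * d.N z ≤ (2 * T ^ 3) * τ ^ 5 :=
          mul_le_mul (by linarith [d.add_le α β]) hzN (d.nonneg _) (by positivity)
      _ ≤ T ^ 3 * (2 * τ ^ 5) ^ 3 := by
        have : (1 : ℝ) ≤ (τ ^ 5) ^ 2 := one_le_pow₀ hτ5
        have : 2 * τ ^ 5 ≤ (2 * τ ^ 5) ^ 3 := by nlinarith
        have hT3 : 0 ≤ T ^ 3 := by positivity
        nlinarith
      _ = _ := by ring
  have hwu : d.N w = 1 := by
    have : IsUnit w := IsUnit.of_mul_eq_one (-(w + 1)) (by linear_combination -hw)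
    obtain ⟨e, rfl⟩ := this
    exact d.unit_N e
  refine ⟨p, r, hr, hx, ?_, ?_⟩
  · have : τ * d.N p ≤ 4 * τ ^ 5 * T := by
      rw [hτ, ← map_mul, e2]
      refine (d.sub_le _ _).trans ?_
      rw [map_mul, map_mul, map_pow, hwu]
      linarith
    have := d.nonneg p
    nlinarith
  · have : τ * d.N r ≤ 4 * τ ^ 5 * T := by
      rw [hτ, ← map_mul, e1]
      refine (d.sub_le _ _).trans ?_
      linarith
    have := d.nonneg r
    nlinarith

end heights

end EkLem

namespace EkLem

open WeierstrassCurve.Affine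

section pts

variable {O : Type*} [CommRing O] [IsDomain O] [IsPrincipalIdealRing O]
  {K : Type*} [Field K] [Algebra O K] [IsFractionRing O K] [DecidableEq K]

/-- height bound for points -/
def HtP (d : NormData O) (k : K) (T : ℝ) : (Ek k).Point → Prop
  | .zero => True
  | .some _ v _ => Ht d K T (v / k)

lemma HtP.mono {d : NormData O} {k : K} {T T' : ℝ} {P : (Ek k).Point} (h : HtP d k T P)
    (hT : T ≤ T') : HtP d k T' P := by
  rcases P with _ | ⟨u, v, hns⟩
  · trivial
  · exact Ht.mono h hT

lemma htP_descent (d : NormData O) {w : O} (hw : w ^ 2 + w + 1 = 0) (h3 : (2 * w + 1) ≠ 0)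
    (hw' : (algebraMap O K w) ^ 2 + algebraMap O K w + 1 = 0) (h3' : (3 : K) ≠ 0)
    {k : K} (hk : k ≠ 0) {T : ℝ} (hT : 1 ≤ T) (W : (Ek k).Point)
    (h : HtP d k (T ^ 3) (phi k _ hw' W)) :
    HtP d k (4 * (d.N (2 * w + 1)) ^ 5 * T) W := by
  have hτ1 : 1 ≤ d.N (2 * w + 1) ^ 5 := one_le_pow₀ (d.one_le _ h3)
  rcases W with _ | ⟨u, v, hns⟩
  · trivial
  by_cases hu : u = 0
  · have he := eq_of_ns hns
    have h0 : v * (v + k) = 0 := by rw [hu] at he; linear_combination he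
    have h1 : (1 : ℝ) ≤ 4 * (d.N (2 * w + 1)) ^ 5 * T := by nlinarith
    rcases mul_eq_zero.1 h0 with h0 | h0
    · change Ht d K _ (v / k)
      rw [h0, zero_div, ← map_zero (algebraMap O K)]
      exact Ht.of_int _ (by rw [map_zero]; linarith) h1
    · change Ht d K _ (v / k)
      rw [eq_neg_of_add_eq_zero_left h0, neg_div, div_self hk]
      apply Ht.neg
      rw [← map_one (algebraMap O K)]
      exact Ht.of_int _ (by rw [map_one]; linarith) h1
  · obtain ⟨u', v', h', hphi, _, e2, e3⟩ := phi_some hw' h3' hns hu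
    rw [hphi] at h
    change Ht d K _ (v / k)
    refine ht_descent d hw h3 hT (x' := v' / k) h ?_
    set ω := algebraMap O K w with hω
    have hs : (2 * ω + 1) ^ 2 = -3 := by linear_combination 4 * hw'
    have hs0 : (2 * ω + 1) ≠ 0 := by intro h0; rw [h0] at hs; apply h3'; linear_combination hs
    have hc : (2 * ω + 1) * 3 * u ^ 3 ≠ 0 := mul_ne_zero (mul_ne_zero hs0 h3') (pow_ne_zero _ hu)
    have key : v' * (v - ω * k) ^ 3 = (v' + k) * (v - ω ^ 2 * k) ^ 3 := by
      apply mul_right_cancel₀ hc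
      linear_combination (v - ω * k) ^ 3 * e2 - (v - ω ^ 2 * k) ^ 3 * e3
    have r1 : v / k - ω = (v - ω * k) / k := by field_simp
    have r2 : v / k - ω ^ 2 = (v - ω ^ 2 * k) / k := by field_simp
    have r3 : v' / k + 1 = (v' + k) / k := by field_simp
    rw [r1, r2, r3, div_pow, div_pow, div_mul_div_comm, div_mul_div_comm, key]

lemma htP_iterate (d : NormData O) {w : O} (hw : w ^ 2 + w + 1 = 0) (h3 : (2 * w + 1) ≠ 0)
    (hw' : (algebraMap O K w) ^ 2 + algebraMap O K w + 1 = 0) (h3' : (3 : K) ≠ 0)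
    {k : K} (hk : k ≠ 0) (c0 : ℝ) (hc0 : c0 = 4 * (d.N (2 * w + 1)) ^ 5) (n : ℕ) {S : ℝ}
    (hS : 1 ≤ S) (W : (Ek k).Point)
    (h : HtP d k (c0 ^ 2 * S ^ (3 ^ n)) ((phi k _ hw')^[n] W)) :
    HtP d k (c0 ^ 2 * S) W := by
  have hc1 : 1 ≤ c0 := by
    rw [hc0]; have := one_le_pow₀ (n := 5) (d.one_le _ h3); linarith
  induction n generalizing W with
  | zero => simpa using h
  | succ n ih =>
    apply ih
    have h1 : 1 ≤ S ^ (3 ^ n) := one_le_pow₀ hS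
    have h2 : HtP d k ((c0 * S ^ (3 ^ n)) ^ 3) (phi k _ hw' ((phi k _ hw')^[n] W)) := by
      rw [← Function.iterate_succ_apply' (phi k _ hw')]
      apply h.mono
      have : S ^ 3 ^ (n + 1) = (S ^ 3 ^ n) ^ 3 := by rw [← pow_mul, pow_succ]
      rw [this, mul_pow]
      gcongr
      norm_num
    have h3 := htP_descent d hw h3 hw' h3' hk (by nlinarith) _ h2
    rw [← hc0] at h3
    apply h3.mono
    apply le_of_eq; ring

lemma htP_card (d : NormData O) {k : K} (hk : k ≠ 0) {T : ℝ} (hT : 1 ≤ T)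
    (S : Finset (Ek k).Point) (hS : ∀ P ∈ S, HtP d k T P) :
    (S.card : ℝ) ≤ 3 * ((d.c * T ^ 2) ^ 2 + 1) := by
  classical
  obtain ⟨hfin, hcard⟩ := ht_count (K := K) d T hT
  set F := hfin.toFinset with hF
  have hFc : (F.card : ℝ) ≤ (d.c * T ^ 2) ^ 2 := by
    rwa [Set.ncard_eq_toFinset_card _ hfin] at hcard
  let f : (Ek k).Point → Option K := fun P => match P with
    | .zero => none
    | .some _ v _ => some (v / k)
  have hmaps : ∀ P ∈ S, f P ∈ Finset.insertNone F := by
    intro P hP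
    have := hS P hP
    rcases P with _ | ⟨u, v, hns⟩
    · simp [f]
    · simp only [f, Finset.some_mem_insertNone, hF, Set.Finite.mem_toFinset]
      exact this
  have hfib : ∀ b ∈ Finset.insertNone F, (S.filter (fun P => f P = b)).card ≤ 3 := by
    intro b _
    rcases b with _ | b
    · have : S.filter (fun P => f P = none) ⊆ {(0 : (Ek k).Point)} := by
        intro P hP
        rw [Finset.mem_filter] at hP
        rcases P with _ | ⟨u, v, hns⟩
        · exact Finset.mem_singleton.2 rfl
        · simp [f] at hP
      exact (Finset.card_le_card this).trans (by simp)
    · let g : (Ek k).Point → K := fun P => match P with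
        | .zero => 0
        | .some u _ _ => u
      have hg : Set.InjOn g (S.filter (fun P => f P = some b) : Finset _) := by
        intro P hP Q hQ hPQ
        rw [Finset.mem_coe, Finset.mem_filter] at hP hQ
        rcases P with _ | ⟨u, v, hns⟩
        · simp [f] at hP
        rcases Q with _ | ⟨u', v', hns'⟩
        · simp [f] at hQ
        have h1 : v / k = b := by simpa [f] using hP.2
        have h2 : v' / k = b := by simpa [f] using hQ.2
        apply some_eq hPQ
        rw [div_eq_iff hk] at h1 h2
        rw [h1, h2]
      rw [← Finset.card_image_of_injOn hg]
      have hsub : (S.filter (fun P => f P = some b)).image g ⊆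
          (Polynomial.nthRoots 3 ((b * k) ^ 2 + k * (b * k))).toFinset := by
        intro x hx
        obtain ⟨P, hP, rfl⟩ := Finset.mem_image.1 hx
        rw [Finset.mem_filter] at hP
        rcases P with _ | ⟨u, v, hns⟩
        · simp [f] at hP
        have h1 : v / k = b := by simpa [f] using hP.2
        rw [div_eq_iff hk] at h1
        rw [Multiset.mem_toFinset, Polynomial.mem_nthRoots (by norm_num), ← h1]
        exact (eq_of_ns hns).symm
      exact (Finset.card_le_card hsub).trans
        ((Multiset.toFinset_card_le _).trans (Polynomial.card_nthRoots _ _))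
  have := Finset.card_le_mul_card_image_of_maps_to hmaps 3 hfib
  rw [Finset.card_insertNone] at this
  calc (S.card : ℝ) ≤ 3 * ((F.card : ℝ) + 1) := by exact_mod_cast this
    _ ≤ _ := by linarith

/-- class map for descent -/
lemma exists_class (k : O) (hk : k ≠ 0) {w : O}
    (hw' : (algebraMap O K w) ^ 2 + algebraMap O K w + 1 = 0) (h3' : (3 : K) ≠ 0) :
    ∃ f : (Ek (algebraMap O K k)).Point → Option (Option (Option O)),
      (∀ P D, f P = some (some (some D)) → D ∣ k ^ 2) ∧
      ∀ P Q, f P = f Q → ∃ W, phi _ _ hw' W = P - Q := by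
  classical
  have hinj := IsFractionRing.injective O K
  have hk' : algebraMap O K k ≠ 0 := by rwa [Ne, map_eq_zero_iff _ hinj]
  have hcl : ∀ u v : K, (Ek (algebraMap O K k)).Nonsingular u v → u ≠ 0 →
      ∃ D : O, D ∣ k ^ 2 ∧ ∃ s : K, v = algebraMap O K D * s ^ 3 := by
    intro u v hns hu
    have he := eq_of_ns hns
    obtain ⟨α, β, hβ, hco, hv⟩ := exists_reduced (O := O) v
    have hβ' : algebraMap O K β ≠ 0 := by rwa [Ne, map_eq_zero_iff _ hinj]
    have hγ : ∃ γ : O, algebraMap O K γ = u * algebraMap O K β := by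
      have hIsI : IsIntegral O ((u * algebraMap O K β) ^ 3) := by
        have : (u * algebraMap O K β) ^ 3 = algebraMap O K (α * β * (α + k * β)) := by
          rw [mul_pow, ← he]
          simp only [map_mul, map_add]
          rw [← hv]; ring
        rw [this]; exact isIntegral_algebraMap
      exact IsIntegrallyClosed.isIntegral_iff.1 (IsIntegral.of_pow (by norm_num) hIsI)
    obtain ⟨γ, hγ⟩ := hγ
    have hγ0 : γ ≠ 0 := by
      rintro rfl; rw [map_zero] at hγ; exact (mul_ne_zero hu hβ') hγ.symm
    have hα0 : α ≠ 0 := by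
      rintro rfl
      rw [map_zero] at hv
      have : v = 0 := by rcases mul_eq_zero.1 hv with h | h; exacts [h, absurd h hβ']
      apply hu; rw [this] at he; simpa using he.symm
    have hprod : α * β * (α + k * β) = γ ^ 3 := by
      apply hinj
      rw [map_pow, hγ, mul_pow, ← he]
      simp only [map_mul, map_add]
      rw [← hv]; ring
    obtain ⟨D, b, c, hD, hb, hbc⟩ := class_exists k α β γ hk hα0 hβ hco hγ0 hprod
    have hb' : algebraMap O K b ≠ 0 := by rwa [Ne, map_eq_zero_iff _ hinj]
    refine ⟨D, hD, algebraMap O K c / algebraMap O K b, ?_⟩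
    rw [div_pow, ← mul_div_assoc, eq_div_iff (pow_ne_zero _ hb')]
    apply mul_right_cancel₀ hβ'
    have := congrArg (algebraMap O K) hbc
    simp only [map_mul, map_pow] at this
    rw [← this, ← hv]; ring
  choose Df hDf hDs using hcl
  let f : (Ek (algebraMap O K k)).Point → Option (Option (Option O)) := fun P => match P with
    | .zero => none
    | .some u v h => if hu : u ≠ 0 then some (some (some (Df u v h hu))) else
        if v = 0 then some none else some (some none)
  refine ⟨f, ?_, ?_⟩
  · intro P D h
    rcases P with _ | ⟨u, v, hns⟩
    · simp [f] at h
    · simp only [f] at h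
      split_ifs at h with h1 h2
      · simp only [Option.some.injEq] at h
        rw [← h]; exact hDf _ _ _ _
      · simp at h
      · simp at h
  · intro P Q h
    rcases P with _ | ⟨u, v, hns⟩
    · rcases Q with _ | ⟨u', v', hns'⟩
      · exact ⟨0, by simp⟩
      · simp only [f] at h; split_ifs at h
    · rcases Q with _ | ⟨u', v', hns'⟩
      · simp only [f] at h; split_ifs at h
      · by_cases hu : u = 0
        · by_cases hu' : u' = 0
          · have hvv : v = v' := by
              have e1 := eq_of_ns hns
              have e2 := eq_of_ns hns'
              simp only [f, hu, hu', ne_eq, not_true_eq_false, dite_false] at h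
              by_cases hv : v = 0 <;> by_cases hv' : v' = 0
              · rw [hv, hv']
              · simp [hv, hv'] at h
              · simp [hv, hv'] at h
              · have a1 : v + algebraMap O K k = 0 := by
                  apply mul_left_cancel₀ hv; rw [hu] at e1; linear_combination e1
                have a2 : v' + algebraMap O K k = 0 := by
                  apply mul_left_cancel₀ hv'; rw [hu'] at e2; linear_combination e2
                linear_combination a1 - a2
            exact ⟨0, by rw [map_zero, eq_comm, sub_eq_zero]; exact some_eq (hu.trans hu'.symm) hvv⟩
          · simp only [f, hu, hu', ne_eq, not_true_eq_false, dite_false, not_false_eq_true,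
              dite_true] at h
            split_ifs at h <;> simp at h
        · by_cases hu' : u' = 0
          · simp only [f, hu, hu', ne_eq, not_true_eq_false, dite_false, not_false_eq_true,
              dite_true] at h
            split_ifs at h <;> simp at h
          · simp only [f, hu, hu', ne_eq, not_false_eq_true,
              dite_true, Option.some.injEq] at h
            obtain ⟨s, hs⟩ := hDs u v hns hu
            obtain ⟨s', hs'⟩ := hDs u' v' hns' hu'
            rw [← h] at hs'
            exact sub_mem_range hw' h3' hk' hns hns' hu hu' hs hs'

end pts

end EkLem

namespace EkLem

open WeierstrassCurve.Affine

section pts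

variable {O : Type*} [CommRing O] [IsDomain O] [IsPrincipalIdealRing O]
  {K : Type*} [Field K] [Algebra O K] [IsFractionRing O K] [DecidableEq K]

lemma Ht.add' {d : NormData O} {b : ℝ} (hb : 2 ≤ b) {m n : ℕ} {x y : K} (h : Ht d K (b ^ m) x)
    (h' : Ht d K (b ^ n) y) : Ht d K (b ^ (m + n + 1)) (x + y) := by
  apply (h.add h').mono
  rw [pow_succ, pow_add]
  have : 0 ≤ b ^ m * b ^ n := by positivity
  nlinarith

lemma Ht.sub' {d : NormData O} {b : ℝ} (hb : 2 ≤ b) {m n : ℕ} {x y : K} (h : Ht d K (b ^ m) x)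
    (h' : Ht d K (b ^ n) y) : Ht d K (b ^ (m + n + 1)) (x - y) := by
  rw [sub_eq_add_neg]; exact h.add' hb h'.neg

lemma Ht.mul' {d : NormData O} {b : ℝ} {m n : ℕ} {x y : K} (h : Ht d K (b ^ m) x)
    (h' : Ht d K (b ^ n) y) : Ht d K (b ^ (m + n)) (x * y) := by
  rw [pow_add]; exact h.mul h'

lemma Ht.div' {d : NormData O} {b : ℝ} {m n : ℕ} {x y : K} (h : Ht d K (b ^ m) x)
    (h' : Ht d K (b ^ n) y) : Ht d K (b ^ (m + n)) (x / y) := by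
  rw [div_eq_mul_inv]; exact h.mul' h'.inv

lemma htP_sub {d : NormData O} {b : ℝ} (hb : 2 ≤ b) {k u v u' v' : K}
    (h : (Ek k).Nonsingular u v) (h' : (Ek k).Nonsingular u' v') (hu : u ≠ u')
    (hk : Ht d K (b ^ 1) k) (h1 : Ht d K (b ^ 1) u) (h2 : Ht d K (b ^ 1) v)
    (h3 : Ht d K (b ^ 1) u') (h4 : Ht d K (b ^ 1) v') :
    HtP d k (b ^ 35) (Point.some u v h - Point.some u' v' h') := by
  rw [sub_eq_add_neg, Point.neg_some, Point.add_of_X_ne hu]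
  change Ht d K _ (_ / k)
  have hl : Ht d K (b ^ 8) ((Ek k).slope u u' v ((Ek k).negY u' v')) := by
    rw [slope_of_X_ne hu]
    have : v - (Ek k).negY u' v' = v + v' + k := by simp only [negY, Ek]; ring
    rw [this]
    exact ((h2.add' hb h4).add' hb hk).div' (h1.sub' hb h3)
  have hX : ∀ l, (Ek k).addX u u' l = l * l - u - u' := by
    intro l; simp only [addX, Ek]; ring
  have hY : ∀ l, (Ek k).addY u u' v l = -(l * ((l * l - u - u') - u) + v) - k := by
    intro l; simp only [addX, addY, negAddY, negY, Ek]; ring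
  rw [hY]
  generalize (Ek k).slope u u' v ((Ek k).negY u' v') = l at *
  exact (((hl.mul' ((((hl.mul' hl).sub' hb h1).sub' hb h3).sub' hb h1)).add' hb h2).neg.sub'
    hb hk).div' hk

theorem points_bound (d : NormData O) {w : O} (hw : w ^ 2 + w + 1 = 0) (h3 : (2 * w + 1) ≠ 0)
    (hw' : (algebraMap O K w) ^ 2 + algebraMap O K w + 1 = 0) (h3' : (3 : K) ≠ 0)
    (ε : ℝ) (hε : 0 < ε) :
    ∃ C : ℝ, 0 < C ∧ ∀ H : ℝ, 1 ≤ H → ∀ k : O, k ≠ 0 → d.N k ≤ H →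
      ∀ S : Finset (Ek (algebraMap O K k)).Point,
      (∀ P ∈ S, ∃ u v h, P = Point.some u v h ∧ Ht d K H u ∧ Ht d K H v) →
      (S.card : ℝ) ≤ C * H ^ ε := by
  classical
  obtain ⟨n, hn⟩ : ∃ n : ℕ, 140 / (ε / 2) < (3 : ℝ) ^ n :=
    pow_unbounded_of_one_lt _ (by norm_num)
  have hn' : 140 / (3 : ℝ) ^ n ≤ ε / 2 := by
    rw [div_lt_iff₀ (by positivity)] at hn
    rw [div_le_iff₀ (by positivity)]; linarith
  set δ : ℝ := ε / (4 * (n + 1)) with hδ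
  have hδ0 : 0 < δ := by positivity
  have hδn : 2 * δ * n ≤ ε / 2 := by
    rw [hδ]
    have : 2 * (ε / (4 * (n + 1))) * n = ε / 2 * (n / (n + 1)) := by field_simp; ring
    rw [this]
    have : (n : ℝ) / (n + 1) ≤ 1 := by rw [div_le_one (by positivity)]; linarith
    nlinarith
  obtain ⟨C1, hC1, hdiv⟩ := d.divisor_bound δ hδ0
  set c0 : ℝ := 4 * (d.N (2 * w + 1)) ^ 5 with hc0
  have hc01 : 1 ≤ c0 := by
    rw [hc0]; have := one_le_pow₀ (n := 5) (d.one_le _ h3); linarith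
  set C2 : ℝ := (2 + 3 * (d.c ^ 2 + 1) * c0 ^ 8) * 2 ^ (ε / 2) with hC2
  have hC20 : 0 < C2 := by positivity
  refine ⟨(C1 + 3) ^ n * C2, by positivity, fun H hH k hk hkH S hS => ?_⟩
  obtain ⟨f, hf1, hf2⟩ := exists_class (K := K) k hk hw' h3'
  have hk2 : k ^ 2 ≠ 0 := pow_ne_zero _ hk
  obtain ⟨hfin, hcard⟩ := hdiv (k ^ 2) hk2
  have hinj := IsFractionRing.injective O K
  have hk' : algebraMap O K k ≠ 0 := by rwa [Ne, map_eq_zero_iff _ hinj]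
  set D := hfin.toFinset with hD
  rw [Set.ncard_eq_toFinset_card _ hfin, ← hD] at hcard
  set Tf := Finset.insertNone (Finset.insertNone (Finset.insertNone D)) with hTf
  have hTc : (Tf.card : ℝ) ≤ (C1 + 3) * H ^ (2 * δ) := by
    rw [hTf]
    simp only [Finset.card_insertNone]
    push_cast
    have h1 : 1 ≤ H ^ (2 * δ) := Real.one_le_rpow hH (by positivity)
    have h2 : d.N (k ^ 2) ^ δ ≤ H ^ (2 * δ) := by
      rw [map_pow, Real.rpow_mul (by linarith), Real.rpow_two]
      apply Real.rpow_le_rpow (by positivity) _ hδ0.le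
      have := d.nonneg k
      gcongr
    have h3 : C1 * d.N (k ^ 2) ^ δ ≤ C1 * H ^ (2 * δ) := by gcongr
    nlinarith
  obtain ⟨S', hS', hc, hW⟩ := pigeon_descent (phi _ _ hw') f Tf (by
    intro P
    rw [hTf, Finset.mem_insertNone]
    intro a ha
    rw [Finset.mem_insertNone]
    intro b hb
    rw [Finset.mem_insertNone]
    intro e he
    rw [hD, Set.Finite.mem_toFinset]
    apply hf1 P e
    rw [Option.mem_def] at ha hb he
    rw [ha, hb, he]) hf2 S n
  set b : ℝ := 2 * H with hb
  have hb2 : 2 ≤ b := by linarith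
  have hS'c : (S'.card : ℝ) ≤ C2 * H ^ (ε / 2) := by
    have hHe : 1 ≤ H ^ (ε / 2) := Real.one_le_rpow hH (by positivity)
    rcases S'.eq_empty_or_nonempty with h0 | ⟨P0, hP0⟩
    · rw [h0]; simp; positivity
    obtain ⟨u0, v0, hns0, hP0e, hu0, hv0⟩ := hS P0 (hS' hP0)
    set S'' := S' \ {P0, -P0} with hS''
    have hcc : S'.card ≤ S''.card + 2 := by
      refine (Finset.card_le_card_sdiff_add_card (t := {P0, -P0}) (s := S')).trans ?_
      exact Nat.add_le_add_left Finset.card_le_two _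
    have hWP : ∀ P, ∃ W, P ∈ S' → (phi _ _ hw')^[n] W = P - P0 := by
      intro P
      by_cases hP : P ∈ S'
      · obtain ⟨W, hW⟩ := hW P hP P0 hP0
        exact ⟨W, fun _ => hW⟩
      · exact ⟨0, fun h => absurd h hP⟩
    choose W hWe using hWP
    have hWinj : Set.InjOn W S'' := by
      intro P hP Q hQ hPQ
      have hP' := (Finset.mem_sdiff.1 (Finset.mem_coe.1 hP)).1
      have hQ' := (Finset.mem_sdiff.1 (Finset.mem_coe.1 hQ)).1
      have h1 := hWe P hP'
      rw [hPQ, hWe Q hQ'] at h1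
      exact (sub_left_inj.1 h1).symm
    set s : ℝ := b ^ (35 / (3 : ℝ) ^ n) with hs
    have hs1 : 1 ≤ s := Real.one_le_rpow (by linarith) (by positivity)
    have hs3 : s ^ (3 ^ n) = b ^ 35 := by
      rw [hs, ← Real.rpow_natCast, ← Real.rpow_mul (by linarith)]
      push_cast
      rw [div_mul_cancel₀ _ (by positivity)]
      norm_cast
    have hht : ∀ Q ∈ S''.image W, HtP d (algebraMap O K k) (c0 ^ 2 * s) Q := by
      intro Q hQ
      obtain ⟨P, hP, rfl⟩ := Finset.mem_image.1 hQ
      rw [hS'', Finset.mem_sdiff] at hP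
      apply htP_iterate d hw h3 hw' h3' hk' c0 hc0 n hs1
      rw [hWe P hP.1, hs3]
      obtain ⟨u, v, hns, hPe, hu, hv⟩ := hS P (hS' hP.1)
      have hne : u ≠ u0 := by
        rintro rfl
        apply hP.2
        rw [Finset.mem_insert, Finset.mem_singleton]
        have e1 := eq_of_ns hns
        have e0 := eq_of_ns hns0
        have : (v - v0) * (v + v0 + algebraMap O K k) = 0 := by linear_combination e1 - e0
        rcases mul_eq_zero.1 this with h | h
        · left; rw [hPe, hP0e]; exact some_eq rfl (sub_eq_zero.1 h)
        · right; rw [hPe, hP0e, Point.neg_some]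
          apply some_eq rfl
          simp only [negY, Ek]; linear_combination h
      have hHb : H ≤ b ^ 1 := by rw [pow_one]; linarith
      have := htP_sub (d := d) hb2 hns hns0 hne
        (Ht.of_int k (hkH.trans hHb) (by rw [pow_one]; linarith))
        (hu.mono hHb) (hv.mono hHb) (hu0.mono hHb) (hv0.mono hHb)
      rw [hPe, hP0e]
      apply this.mono
      have h1 : (1 : ℝ) ≤ c0 ^ 2 := one_le_pow₀ hc01
      have h2 : (0 : ℝ) ≤ b ^ 35 := by positivity
      nlinarith
    have hT1 : 1 ≤ c0 ^ 2 * s := by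
      have h1 : (1 : ℝ) ≤ c0 ^ 2 := one_le_pow₀ hc01
      nlinarith
    have h5 := htP_card d hk' hT1 _ hht
    rw [Finset.card_image_of_injOn hWinj] at h5
    have hs4 : s ^ 4 ≤ b ^ (ε / 2) := by
      rw [hs, ← Real.rpow_natCast, ← Real.rpow_mul (by linarith)]
      apply Real.rpow_le_rpow_of_exponent_le (by linarith)
      push_cast
      calc 35 / (3 : ℝ) ^ n * 4 = 140 / 3 ^ n := by ring
        _ ≤ _ := hn'
    have hbe : b ^ (ε / 2) = 2 ^ (ε / 2) * H ^ (ε / 2) := by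
      rw [hb, Real.mul_rpow (by norm_num) (by linarith)]
    have h6 : 3 * ((d.c * (c0 ^ 2 * s) ^ 2) ^ 2 + 1) ≤ 3 * (d.c ^ 2 + 1) * c0 ^ 8 * s ^ 4 := by
      have h1 : (1 : ℝ) ≤ (c0 ^ 2 * s) ^ 4 := one_le_pow₀ hT1
      have h2 : 0 ≤ d.c ^ 2 := sq_nonneg _
      nlinarith
    have h2e : (1 : ℝ) ≤ 2 ^ (ε / 2) := Real.one_le_rpow (by norm_num) (by positivity)
    calc (S'.card : ℝ) ≤ S''.card + 2 := by exact_mod_cast hcc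
      _ ≤ 3 * (d.c ^ 2 + 1) * c0 ^ 8 * s ^ 4 + 2 := by linarith
      _ ≤ 3 * (d.c ^ 2 + 1) * c0 ^ 8 * b ^ (ε / 2) + 2 * b ^ (ε / 2) := by
          have : 1 ≤ b ^ (ε / 2) := Real.one_le_rpow (by linarith) (by positivity)
          gcongr
          linarith
      _ = C2 * H ^ (ε / 2) := by rw [hbe, hC2]; ring
  have hTn : (Tf.card : ℝ) ^ n ≤ (C1 + 3) ^ n * H ^ (ε / 2) := by
    calc (Tf.card : ℝ) ^ n ≤ ((C1 + 3) * H ^ (2 * δ)) ^ n := by gcongr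
      _ = (C1 + 3) ^ n * H ^ (2 * δ * n) := by
        rw [mul_pow]; congr 1
        rw [← Real.rpow_natCast, ← Real.rpow_mul (by linarith)]
      _ ≤ _ := by
        gcongr
  have hsplit : H ^ ε = H ^ (ε / 2) * H ^ (ε / 2) := by
    rw [← Real.rpow_add (by linarith)]; congr 1; ring
  calc (S.card : ℝ) ≤ (Tf.card : ℝ) ^ n * S'.card := by exact_mod_cast hc
    _ ≤ ((C1 + 3) ^ n * H ^ (ε / 2)) * (C2 * H ^ (ε / 2)) := by gcongr
    _ = _ := by rw [hsplit]; ring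

end pts

end EkLem

namespace EkLem

open NumberField

lemma int_count (T : ℝ) : {x : ℤ | |(x : ℝ)| ≤ T}.Finite ∧
    (0 ≤ T → ({x : ℤ | |(x : ℝ)| ≤ T}.ncard : ℝ) ≤ 2 * T + 1) := by
  have hset : {x : ℤ | |(x : ℝ)| ≤ T} = (Finset.Icc (-⌊T⌋) ⌊T⌋ : Finset ℤ) := by
    ext x
    rw [Set.mem_setOf_eq, Finset.mem_coe, Finset.mem_Icc, abs_le, Int.le_floor]
    constructor
    · rintro ⟨h1, h2⟩
      refine ⟨?_, h2⟩
      rw [neg_le, Int.le_floor]; push_cast; linarith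
    · rintro ⟨h1, h2⟩
      rw [neg_le, Int.le_floor] at h1; push_cast at h1
      exact ⟨by linarith, h2⟩
  rw [hset]
  refine ⟨Finset.finite_toSet _, fun hT => ?_⟩
  rw [Set.ncard_coe_finset, Int.card_Icc]
  have h0 : 0 ≤ ⌊T⌋ := Int.floor_nonneg.2 hT
  have : ((⌊T⌋ + 1 - -⌊T⌋).toNat : ℤ) = 2 * ⌊T⌋ + 1 := by
    rw [Int.toNat_of_nonneg (by omega)]; ring
  have h2 : (((⌊T⌋ + 1 - -⌊T⌋).toNat : ℤ) : ℝ) = 2 * ⌊T⌋ + 1 := by rw [this]; push_cast; ring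
  rw [Int.cast_natCast] at h2
  rw [h2]
  linarith [Int.floor_le T]

/-- norm data for the integers -/
noncomputable def intData : NormData ℤ where
  N := { toFun := fun x => |(x : ℝ)|, map_zero' := by simp, map_one' := by simp,
         map_mul' := by intro x y; push_cast; exact abs_mul _ _ }
  one_le := by
    intro x hx
    change (1 : ℝ) ≤ |(x : ℝ)|
    exact_mod_cast Int.one_le_abs hx
  add_le := by intro x y; change |((x + y : ℤ) : ℝ)| ≤ _; push_cast; exact abs_add_le _ _
  c := 3
  fin := fun T => (int_count T).1
  count := fun T hT => ((int_count T).2 (by linarith)).trans (by nlinarith)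

lemma eis_norm {z : ℂ} (hz : z ^ 2 + z + 1 = 0) (a b : ℝ) :
    ‖(a : ℂ) + b * z‖ ^ 2 = a ^ 2 - a * b + b ^ 2 := by
  have h1 := congrArg Complex.re hz
  have h2 := congrArg Complex.im hz
  simp [pow_two] at h1 h2
  have him : z.im ≠ 0 := by
    intro h0; rw [h0] at h1; nlinarith [sq_nonneg (z.re + 1 / 2)]
  have hre : z.re = -1 / 2 := by
    have : z.im * (2 * z.re + 1) = 0 := by linear_combination h2
    rcases mul_eq_zero.1 this with h | h
    · exact absurd h him
    · linarith
  rw [← Complex.normSq_eq_norm_sq, Complex.normSq_apply]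
  simp
  rw [hre] at h1 ⊢
  linear_combination (-b ^ 2) * h1

abbrev K3 := CyclotomicField 3 ℚ

lemma exists_data : ∃ (d : NormData (𝓞 K3)) (w : 𝓞 K3), w ^ 2 + w + 1 = 0 ∧ 2 * w + 1 ≠ 0 ∧
    ∀ n : ℤ, d.N n = |(n : ℝ)| := by
  haveI : NeZero ((3 : ℕ) : ℚ) := ⟨by norm_num⟩
  haveI : IsCyclotomicExtension {3} ℚ K3 := CyclotomicField.isCyclotomicExtension 3 ℚ
  have hζ := IsCyclotomicExtension.zeta_spec 3 ℚ K3
  set w := hζ.toInteger with hwdef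
  have hwr : IsPrimitiveRoot w 3 := hζ.toInteger_isPrimitiveRoot
  have hw : w ^ 2 + w + 1 = 0 := by
    have := hwr.geom_sum_eq_zero (by norm_num)
    simp [Finset.sum_range_succ] at this
    linear_combination this
  have hw3 : w ^ 3 = 1 := hwr.pow_eq_one
  have hrep : ∀ x : 𝓞 K3, ∃ a b : ℤ, x = a + b * w := by
    intro x
    have htop := hζ.integralPowerBasis.adjoin_gen_eq_top
    rw [hζ.integralPowerBasis_gen] at htop
    have hx : x ∈ Algebra.adjoin ℤ {w} := by rw [hwdef, htop]; trivial
    induction hx using Algebra.adjoin_induction with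
    | mem x hx => exact ⟨0, 1, by rw [Set.mem_singleton_iff.1 hx]; simp⟩
    | algebraMap r => exact ⟨r, 0, by simp⟩
    | add x y _ _ hx hy =>
      obtain ⟨a, b, rfl⟩ := hx
      obtain ⟨a', b', rfl⟩ := hy
      exact ⟨a + a', b + b', by push_cast; ring⟩
    | mul x y _ _ hx hy =>
      obtain ⟨a, b, rfl⟩ := hx
      obtain ⟨a', b', rfl⟩ := hy
      refine ⟨a * a' - b * b', a * b' + a' * b - b * b', ?_⟩
      push_cast
      linear_combination ((b : 𝓞 K3) * b') * hw
  let σ : 𝓞 K3 →+* ℂ := ((IsAlgClosed.lift : K3 →ₐ[ℚ] ℂ) : K3 →+* ℂ).comp (algebraMap (𝓞 K3) K3)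
  have hz : (σ w) ^ 2 + σ w + 1 = 0 := by
    rw [← map_pow, ← map_add, ← map_one σ, ← map_add, hw, map_zero]
  have hN : ∀ a b : ℤ, ‖σ (a + b * w)‖ ^ 2 = ((a ^ 2 - a * b + b ^ 2 : ℤ) : ℝ) := by
    intro a b
    have := eis_norm hz a b
    rw [map_add, map_mul, map_intCast, map_intCast]
    push_cast at this ⊢
    exact this
  have hsmall : ∀ (T : ℝ) (a b : ℤ), ‖σ (a + b * w)‖ ≤ T → |(a : ℝ)| ≤ 2 * T ∧ |(b : ℝ)| ≤ 2 * T := by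
    intro T a b h
    have h0 := norm_nonneg (σ (a + b * w))
    have h1 := hN a b
    push_cast at h1
    have h2 : (a : ℝ) ^ 2 - a * b + b ^ 2 ≤ T ^ 2 := by rw [← h1]; gcongr
    constructor
    · apply abs_le_of_sq_le_sq _ (by linarith)
      nlinarith [sq_nonneg ((a : ℝ) - 2 * b)]
    · apply abs_le_of_sq_le_sq _ (by linarith)
      nlinarith [sq_nonneg ((b : ℝ) - 2 * a)]
  have hcnt : ∀ T : ℝ, ({x | ‖σ x‖ ≤ T} : Set (𝓞 K3)).Finite ∧
      (1 ≤ T → (({x | ‖σ x‖ ≤ T} : Set (𝓞 K3)).ncard : ℝ) ≤ 25 * T ^ 2) := by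
    intro T
    classical
    obtain ⟨hf, hc⟩ := int_count (2 * T)
    set F := hf.toFinset with hF
    have hsub : ({x | ‖σ x‖ ≤ T} : Set (𝓞 K3)) ⊆
        ((F ×ˢ F).image (fun s : ℤ × ℤ => (s.1 : 𝓞 K3) + s.2 * w) : Finset (𝓞 K3)) := by
      intro x hx
      obtain ⟨a, b, rfl⟩ := hrep x
      obtain ⟨h1, h2⟩ := hsmall T a b hx
      rw [Finset.mem_coe, Finset.mem_image]
      refine ⟨(a, b), ?_, rfl⟩
      rw [Finset.mem_product, hF, Set.Finite.mem_toFinset, Set.Finite.mem_toFinset]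
      exact ⟨h1, h2⟩
    refine ⟨(Finset.finite_toSet _).subset hsub, fun hT => ?_⟩
    have h1 := (Set.ncard_le_ncard hsub (Finset.finite_toSet _))
    rw [Set.ncard_coe_finset] at h1
    have h2 := h1.trans (Finset.card_image_le.trans (Finset.card_product _ _).le)
    have hFc : (F.card : ℝ) ≤ 2 * (2 * T) + 1 := by
      have := hc (by linarith)
      rwa [Set.ncard_eq_toFinset_card _ hf] at this
    calc ((({x | ‖σ x‖ ≤ T} : Set (𝓞 K3)).ncard : ℕ) : ℝ) ≤ F.card * F.card := by exact_mod_cast h2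
      _ ≤ (5 * T) * (5 * T) := by gcongr <;> linarith
      _ = _ := by ring
  refine ⟨{ N := { toFun := fun x => ‖σ x‖, map_zero' := by simp, map_one' := by simp,
                   map_mul' := by intro x y; rw [map_mul, norm_mul] }
            one_le := ?_
            add_le := ?_
            c := 25
            fin := fun T => (hcnt T).1
            count := fun T hT => (hcnt T).2 hT }, w, hw, ?_, ?_⟩
  · intro x hx
    change 1 ≤ ‖σ x‖
    obtain ⟨a, b, rfl⟩ := hrep x
    have h1 := hN a b
    have h2 : (1 : ℤ) ≤ a ^ 2 - a * b + b ^ 2 := by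
      by_contra hcon
      have h0 : 2 * (a ^ 2 - a * b + b ^ 2) ≤ 0 := by omega
      have ha : a = 0 := by nlinarith [sq_nonneg (a - b), sq_nonneg a, sq_nonneg b]
      have hb : b = 0 := by nlinarith [sq_nonneg (a - b), sq_nonneg a, sq_nonneg b]
      apply hx; rw [ha, hb]; simp
    have h3 : (1 : ℝ) ≤ ‖σ (a + b * w)‖ ^ 2 := by rw [h1]; exact_mod_cast h2
    have h4 := norm_nonneg (σ (a + b * w))
    nlinarith
  · intro x y
    change ‖σ (x + y)‖ ≤ ‖σ x‖ + ‖σ y‖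
    rw [map_add]; exact norm_add_le _ _
  · intro h
    have : (2 * w + 1) ^ 2 = -3 := by linear_combination 4 * hw
    rw [h] at this
    norm_num at this
  · intro n
    change ‖σ n‖ = _
    rw [map_intCast, Complex.norm_intCast]

instance : IsPrincipalIdealRing (𝓞 K3) := by
  haveI : NeZero ((3 : ℕ) : ℚ) := ⟨by norm_num⟩
  haveI : IsCyclotomicExtension {3} ℚ K3 := CyclotomicField.isCyclotomicExtension 3 ℚ
  exact IsCyclotomicExtension.Rat.three_pid K3

end EkLem

namespace EkLem

open NumberField WeierstrassCurve.Affine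

lemma cube_inj {a b : ℚ} (h : a ^ 3 = b ^ 3) : a = b :=
  (Odd.strictMono_pow (R := ℚ) (n := 3) ⟨1, rfl⟩).injective h

theorem dc_bound (ε : ℝ) (hε : 0 < ε) :
    ∃ C : ℝ, 0 < C ∧ ∀ H : ℝ, 1 ≤ H → ∀ A B m : ℤ, A ≠ 0 → B ≠ 0 → m ≠ 0 →
      |(A : ℝ)| ≤ H → |(B : ℝ)| ≤ H → |(m : ℝ)| ≤ H →
      ∀ S : Finset (ℚ × ℚ), (∀ p ∈ S, (A : ℚ) * p.1 ^ 3 + (B : ℚ) * p.2 ^ 3 = (m : ℚ) ∧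
        ∃ y₁ y₂ q : ℤ, q ≠ 0 ∧ |(y₁ : ℝ)| ≤ H ∧ |(y₂ : ℝ)| ≤ H ∧ |(q : ℝ)| ≤ H ∧
          p.1 * q = y₁ ∧ p.2 * q = y₂) →
      (S.card : ℝ) ≤ C * H ^ ε := by
  classical
  obtain ⟨d, w, hw, h3, hN⟩ := exists_data
  have hinj := IsFractionRing.injective (𝓞 K3) K3
  have hw' : (algebraMap (𝓞 K3) K3 w) ^ 2 + algebraMap (𝓞 K3) K3 w + 1 = 0 := by
    have := congrArg (algebraMap (𝓞 K3) K3) hw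
    simpa using this
  have h3' : (3 : K3) ≠ 0 := by norm_num
  obtain ⟨C, hC, hmain⟩ := points_bound (K := K3) d hw h3 hw' h3' (ε / 6) (by positivity)
  refine ⟨C, hC, fun H hH A B m hA hB hm hAH hBH hmH S hS => ?_⟩
  have hH6 : 1 ≤ H ^ 6 := one_le_pow₀ hH
  have hH36 : H ^ 3 ≤ H ^ 6 := pow_le_pow_right₀ hH (by norm_num)
  have hH46 : H ^ 4 ≤ H ^ 6 := pow_le_pow_right₀ hH (by norm_num)
  have hH26 : H ^ 2 ≤ H ^ 6 := pow_le_pow_right₀ hH (by norm_num)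
  set k : 𝓞 K3 := ((A * B * m : ℤ) : 𝓞 K3) with hk
  have hk0 : k ≠ 0 := by
    rw [hk]; exact_mod_cast mul_ne_zero (mul_ne_zero hA hB) hm
  have hkN : d.N k ≤ H ^ 6 := by
    rw [hk, hN]
    push_cast
    rw [abs_mul, abs_mul]
    calc |(A : ℝ)| * |(B : ℝ)| * |(m : ℝ)| ≤ H * H * H := by gcongr
      _ = H ^ 3 := by ring
      _ ≤ _ := hH36
  have hk' : algebraMap (𝓞 K3) K3 k ≠ 0 := by rwa [Ne, map_eq_zero_iff _ hinj]
  have hkv : algebraMap (𝓞 K3) K3 k = (A : K3) * B * m := by rw [hk]; push_cast; simp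
  have heq : ∀ p : ℚ × ℚ, (A : ℚ) * p.1 ^ 3 + (B : ℚ) * p.2 ^ 3 = (m : ℚ) →
      (-((A : K3) ^ 2 * B * (p.1 : K3) ^ 3)) ^ 2 +
        algebraMap (𝓞 K3) K3 k * (-((A : K3) ^ 2 * B * (p.1 : K3) ^ 3))
        = (-((A : K3) * B * p.1 * p.2)) ^ 3 := by
    intro p hp
    rw [hkv]
    have : (A : K3) * (p.1 : K3) ^ 3 + B * (p.2 : K3) ^ 3 = m := by
      have := congrArg (fun x : ℚ => (x : K3)) hp
      push_cast at this
      exact this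
    rw [← this]; ring
  let g : ℚ × ℚ → (Ek (algebraMap (𝓞 K3) K3 k)).Point := fun p =>
    if hp : (A : ℚ) * p.1 ^ 3 + (B : ℚ) * p.2 ^ 3 = (m : ℚ) then
      Point.some (-((A : K3) * B * p.1 * p.2)) (-((A : K3) ^ 2 * B * (p.1 : K3) ^ 3))
        (ns_of_eq hk' h3' (heq p hp)) else 0
  have hg : ∀ p (hp : (A : ℚ) * p.1 ^ 3 + (B : ℚ) * p.2 ^ 3 = (m : ℚ)), g p =
      Point.some (-((A : K3) * B * p.1 * p.2)) (-((A : K3) ^ 2 * B * (p.1 : K3) ^ 3))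
        (ns_of_eq hk' h3' (heq p hp)) := fun p hp => dif_pos hp
  have hginj : Set.InjOn g S := by
    intro p hp p' hp' h
    obtain ⟨e, _⟩ := hS p hp
    obtain ⟨e', _⟩ := hS p' hp'
    rw [hg p e, hg p' e'] at h
    have hv : -((A : K3) ^ 2 * B * (p.1 : K3) ^ 3) = -((A : K3) ^ 2 * B * (p'.1 : K3) ^ 3) := by
      injection h
    have hAB : (A : K3) ^ 2 * B ≠ 0 := by
      exact_mod_cast mul_ne_zero (pow_ne_zero 2 hA) hB
    have h1 : (p.1 : K3) ^ 3 = (p'.1 : K3) ^ 3 := by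
      apply mul_left_cancel₀ hAB; linear_combination -hv
    have h2 : p.1 ^ 3 = p'.1 ^ 3 := by exact_mod_cast h1
    have h4 : p.2 ^ 3 = p'.2 ^ 3 := by
      have hB' : (B : ℚ) ≠ 0 := by exact_mod_cast hB
      apply mul_left_cancel₀ hB'
      linear_combination e - e' - A * h2
    exact Prod.ext (cube_inj h2) (cube_inj h4)
  have hres := hmain (H ^ 6) hH6 k hk0 hkN (S.image g) (by
    intro P hP
    obtain ⟨p, hp, rfl⟩ := Finset.mem_image.1 hP
    obtain ⟨e, y₁, y₂, q, hq, hy1, hy2, hqH, hp1, hp2⟩ := hS p hp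
    refine ⟨_, _, _, hg p e, ?_, ?_⟩
    · refine ⟨((-(A * B * y₁ * y₂) : ℤ) : 𝓞 K3), ((q ^ 2 : ℤ) : 𝓞 K3), ?_, ?_, ?_, ?_⟩
      · exact_mod_cast pow_ne_zero 2 hq
      · have e1 : (p.1 : K3) * q = y₁ := by exact_mod_cast congrArg (fun x : ℚ => (x : K3)) hp1
        have e2 : (p.2 : K3) * q = y₂ := by exact_mod_cast congrArg (fun x : ℚ => (x : K3)) hp2
        rw [map_intCast, map_intCast]
        push_cast
        rw [← e1, ← e2]; ring
      · rw [hN]; push_cast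
        rw [abs_neg, abs_mul, abs_mul, abs_mul]
        calc |(A : ℝ)| * |(B : ℝ)| * |(y₁ : ℝ)| * |(y₂ : ℝ)| ≤ H * H * H * H := by gcongr
          _ = H ^ 4 := by ring
          _ ≤ _ := hH46
      · rw [hN]; push_cast
        rw [abs_pow]
        calc |(q : ℝ)| ^ 2 ≤ H ^ 2 := by gcongr
          _ ≤ _ := hH26
    · refine ⟨((-(A ^ 2 * B * y₁ ^ 3) : ℤ) : 𝓞 K3), ((q ^ 3 : ℤ) : 𝓞 K3), ?_, ?_, ?_, ?_⟩
      · exact_mod_cast pow_ne_zero 3 hq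
      · have e1 : (p.1 : K3) * q = y₁ := by exact_mod_cast congrArg (fun x : ℚ => (x : K3)) hp1
        rw [map_intCast, map_intCast]
        push_cast
        rw [← e1]; ring
      · rw [hN]; push_cast
        rw [abs_neg, abs_mul, abs_mul, abs_pow, abs_pow]
        calc |(A : ℝ)| ^ 2 * |(B : ℝ)| * |(y₁ : ℝ)| ^ 3 ≤ H ^ 2 * H * H ^ 3 := by gcongr
          _ = H ^ 6 := by ring
      · rw [hN]; push_cast
        rw [abs_pow]
        calc |(q : ℝ)| ^ 3 ≤ H ^ 3 := by gcongr
          _ ≤ _ := hH36)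
  rw [Finset.card_image_of_injOn hginj] at hres
  refine hres.trans (le_of_eq ?_)
  congr 1
  rw [← Real.rpow_natCast, ← Real.rpow_mul (by linarith)]
  congr 1; push_cast; ring

end EkLem

namespace EkLem

/-- The divisibility extracted from the congruences. -/
lemma key_dvd {A b q κ x1 x2 y1 y2 t q0 z1 z2 : ℤ}
    (hqb : IsCoprime q b) (hκ : IsCoprime κ q) (htq : IsCoprime t q0)
    (hq : q = t * q0) (hy1 : y1 = t * z1) (hy2 : y2 = t * z2) (ht : t ≠ 0)
    (h1 : q ∣ b * x1 - κ ^ 3 * A * x2) (h2 : q ∣ κ ^ 2 * A * y1 + b * y2)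
    (h3 : q ^ 2 ∣ 2 * b * x1 * y1 + κ ^ 3 * A * x2 * y1 + 3 * κ * b * x2 * y2)
    (h4 : q ^ 3 ∣ 5 * κ ^ 2 * A * b * x1 * y1 + b ^ 2 * x1 * y2 +
      κ ^ 5 * A ^ 2 * x2 * y1 + 5 * κ ^ 3 * A * b * x2 * y2) :
    q ^ 3 * t ^ 2 ∣ 18 * (A * x1 ^ 2 * y1 ^ 3 + b * x2 ^ 2 * y2 ^ 3) := by
  have hq3 : q ^ 3 ∣ 18 * (A * x1 ^ 2 * y1 ^ 3 + b * x2 ^ 2 * y2 ^ 3) := by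
    have hc : IsCoprime (q ^ 3) (b ^ 2) := hqb.pow
    apply hc.dvd_of_dvd_mul_left
    obtain ⟨l1, e1⟩ := h1
    obtain ⟨l2, e2⟩ := h2
    obtain ⟨c3, e3⟩ := h3
    obtain ⟨c4, e4⟩ := h4
    refine ⟨9 * (κ * A * x2 * y1 ^ 2 * c4 + A * y1 * c3 * (y1 * l1 - 2 * κ * x2 * l2)
      + 2 * x2 ^ 2 * l2 ^ 3), ?_⟩
    have : b ^ 2 * (18 * (A * x1 ^ 2 * y1 ^ 3 + b * x2 ^ 2 * y2 ^ 3)) =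
      9 * (κ * A * x2 * y1 ^ 2 * (5 * κ ^ 2 * A * b * x1 * y1 + b ^ 2 * x1 * y2 +
        κ ^ 5 * A ^ 2 * x2 * y1 + 5 * κ ^ 3 * A * b * x2 * y2)
       + A * y1 * (2 * b * x1 * y1 + κ ^ 3 * A * x2 * y1 + 3 * κ * b * x2 * y2) *
        (y1 * (b * x1 - κ ^ 3 * A * x2) - 2 * κ * x2 * (κ ^ 2 * A * y1 + b * y2))
       + 2 * x2 ^ 2 * (κ ^ 2 * A * y1 + b * y2) ^ 3) := by ring
    rw [this, e1, e2, e3, e4]; ring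
  have hF : 18 * (A * x1 ^ 2 * y1 ^ 3 + b * x2 ^ 2 * y2 ^ 3) =
      t ^ 3 * (18 * (A * x1 ^ 2 * z1 ^ 3 + b * x2 ^ 2 * z2 ^ 3)) := by
    rw [hy1, hy2]; ring
  have ht5 : t ^ 5 ∣ 18 * (A * x1 ^ 2 * y1 ^ 3 + b * x2 ^ 2 * y2 ^ 3) := by
    rw [hF, show t ^ 5 = t ^ 3 * t ^ 2 by ring]
    apply mul_dvd_mul_left
    have htb : IsCoprime t b := by rw [hq] at hqb; exact hqb.of_mul_left_left
    have htκ : IsCoprime t κ := by rw [hq] at hκ; exact hκ.symm.of_mul_left_left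
    have hc : IsCoprime (t ^ 2) (b ^ 2) := htb.pow
    apply hc.dvd_of_dvd_mul_left
    have htq' : t ∣ q := ⟨q0, hq⟩
    have d1 : t ∣ b * x1 - κ ^ 3 * A * x2 := htq'.trans h1
    have d3 : t ∣ 2 * b * x1 * z1 + κ ^ 3 * A * x2 * z1 + 3 * κ * b * x2 * z2 := by
      apply Int.dvd_of_mul_dvd_mul_left ht
      have := (pow_dvd_pow_of_dvd htq' 2).trans h3
      rw [hy1, hy2] at this
      rw [show t * (2 * b * x1 * z1 + κ ^ 3 * A * x2 * z1 + 3 * κ * b * x2 * z2) =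
        2 * b * x1 * (t * z1) + κ ^ 3 * A * x2 * (t * z1) + 3 * κ * b * x2 * (t * z2) by ring,
        ← sq]
      exact this
    have d4 : t ^ 2 ∣ 5 * κ ^ 2 * A * b * x1 * z1 + b ^ 2 * x1 * z2 +
      κ ^ 5 * A ^ 2 * x2 * z1 + 5 * κ ^ 3 * A * b * x2 * z2 := by
      apply Int.dvd_of_mul_dvd_mul_left ht
      have := (pow_dvd_pow_of_dvd htq' 3).trans h4
      rw [hy1, hy2] at this
      rw [show t * (5 * κ ^ 2 * A * b * x1 * z1 + b ^ 2 * x1 * z2 +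
        κ ^ 5 * A ^ 2 * x2 * z1 + 5 * κ ^ 3 * A * b * x2 * z2) =
        5 * κ ^ 2 * A * b * x1 * (t * z1) + b ^ 2 * x1 * (t * z2) +
        κ ^ 5 * A ^ 2 * x2 * (t * z1) + 5 * κ ^ 3 * A * b * x2 * (t * z2) by ring,
        show t * t ^ 2 = t ^ 3 by ring]
      exact this
    have d2 : t ∣ 3 * x2 * (κ ^ 2 * A * z1 + b * z2) := by
      apply htκ.dvd_of_dvd_mul_left
      have := dvd_sub d3 (d1.mul_left (2 * z1))
      convert this using 1; ring
    obtain ⟨l1, e1⟩ := d1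
    obtain ⟨l2, e2⟩ := d2
    obtain ⟨c3, e3⟩ := d3
    obtain ⟨c4, e4⟩ := d4
    refine ⟨9 * (κ * A * x2 * z1 ^ 2) * c4 + A * z1 * c3 * (9 * z1 * l1 - 6 * κ * l2)
      + 2 * l2 ^ 2 * (κ ^ 2 * A * z1 + b * z2), ?_⟩
    have : b ^ 2 * (18 * (A * x1 ^ 2 * z1 ^ 3 + b * x2 ^ 2 * z2 ^ 3)) =
      9 * (κ * A * x2 * z1 ^ 2) * (5 * κ ^ 2 * A * b * x1 * z1 + b ^ 2 * x1 * z2 +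
        κ ^ 5 * A ^ 2 * x2 * z1 + 5 * κ ^ 3 * A * b * x2 * z2)
       + A * z1 * (2 * b * x1 * z1 + κ ^ 3 * A * x2 * z1 + 3 * κ * b * x2 * z2) *
        (9 * z1 * (b * x1 - κ ^ 3 * A * x2) - 6 * κ * (3 * x2 * (κ ^ 2 * A * z1 + b * z2)))
       + 2 * (3 * x2 * (κ ^ 2 * A * z1 + b * z2)) ^ 2 * (κ ^ 2 * A * z1 + b * z2) := by ring
    rw [this, e1, e2, e3, e4]; ring
  have hq03 : q0 ^ 3 ∣ 18 * (A * x1 ^ 2 * y1 ^ 3 + b * x2 ^ 2 * y2 ^ 3) :=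
    (pow_dvd_pow_of_dvd ⟨t, by rw [hq]; ring⟩ 3).trans hq3
  have : IsCoprime (t ^ 5) (q0 ^ 3) := htq.pow
  have h := this.mul_dvd ht5 hq03
  rw [hq]
  rw [show (t * q0) ^ 3 * t ^ 2 = t ^ 5 * q0 ^ 3 by ring]
  exact h

/-- gcd of `q, y1, y2`. -/
def tg (q y1 y2 : ℤ) : ℤ := (Int.gcd q (Int.gcd y1 y2 : ℤ) : ℤ)

lemma tg_dvd (q y1 y2 : ℤ) : tg q y1 y2 ∣ q ∧ tg q y1 y2 ∣ y1 ∧ tg q y1 y2 ∣ y2 :=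
  ⟨Int.gcd_dvd_left .., (Int.gcd_dvd_right ..).trans (Int.gcd_dvd_left ..),
    (Int.gcd_dvd_right ..).trans (Int.gcd_dvd_right ..)⟩

lemma dvd_tg {d q y1 y2 : ℤ} (h : d ∣ q) (h1 : d ∣ y1) (h2 : d ∣ y2) : d ∣ tg q y1 y2 :=
  Int.dvd_coe_gcd h (Int.dvd_coe_gcd h1 h2)

lemma tg_pos {q y1 y2 : ℤ} (h : 0 < q) : 0 < tg q y1 y2 := by
  unfold tg
  have : Int.gcd q (Int.gcd y1 y2 : ℤ) ≠ 0 := by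
    intro h0; rw [Int.gcd_eq_zero_iff] at h0; omega
  omega

lemma tg_le {q y1 y2 : ℤ} (h : 0 < q) : tg q y1 y2 ≤ q := Int.le_of_dvd h (tg_dvd ..).1

lemma tg_mul (q y1 y2 c : ℤ) (hc : 0 ≤ c) : tg (q * c) (y1 * c) (y2 * c) = tg q y1 y2 * c := by
  unfold tg
  rw [Int.gcd_mul_right, Nat.cast_mul, Int.natAbs_of_nonneg hc, Int.gcd_mul_right, Nat.cast_mul,
    Int.natAbs_of_nonneg hc]

lemma q_unique {q y1 y2 q' y1' y2' : ℤ} (hq : 0 < q) (hq' : 0 < q')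
    (ht : tg q y1 y2 = tg q' y1' y2') (h1 : y1 * q' = y1' * q) (h2 : y2 * q' = y2' * q) :
    q = q' ∧ y1 = y1' ∧ y2 = y2' := by
  have e1 := tg_mul q y1 y2 q' hq'.le
  have e2 := tg_mul q' y1' y2' q hq.le
  rw [h1, h2, mul_comm q q', e2, ← ht] at e1
  have hqq : q = q' := mul_left_cancel₀ (tg_pos hq).ne' e1
  subst hqq
  exact ⟨rfl, mul_right_cancel₀ hq.ne' h1, mul_right_cancel₀ hq.ne' h2⟩

lemma coprime_of_sqf {q a b : ℤ} (h : Squarefree q) (e : q = a * b) : IsCoprime a b := by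
  rw [e] at h
  exact IsRelPrime.isCoprime (IsRelPrime.of_squarefree_mul h)

lemma kappa_count {A b q y1 y2 : ℤ} (hq : 0 < q) (hs : Squarefree q)
    (hqb : IsCoprime q b) (hqA : IsCoprime q A)
    (S : Finset ℤ) (hS : ∀ κ ∈ S, 0 ≤ κ ∧ κ < q ∧ q ∣ κ ^ 2 * A * y1 + b * y2)
    (hfin : {x : ℤ | x ∣ q}.Finite) :
    S.card ≤ (tg q y1 y2).toNat * hfin.toFinset.card := by
  classical
  rcases S.eq_empty_or_nonempty with rfl | ⟨κ₀, hκ₀⟩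
  · simp
  obtain ⟨h0, h0', h0d⟩ := hS κ₀ hκ₀
  set t := tg q y1 y2 with ht
  obtain ⟨q0, hq0⟩ := (tg_dvd q y1 y2).1
  rw [← ht] at hq0
  have htpos : 0 < t := tg_pos hq
  have htq := coprime_of_sqf hs hq0
  have hq0q : q0 ∣ q := ⟨t, by rw [hq0]; ring⟩
  have hs0 : Squarefree q0 := hs.squarefree_of_dvd hq0q
  have hq0b : IsCoprime q0 b := hqb.of_isCoprime_of_dvd_left hq0q
  have hq0A : IsCoprime q0 A := hqA.of_isCoprime_of_dvd_left hq0q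
  have hq0y : IsCoprime q0 y1 := by
    rw [Int.isCoprime_iff_gcd_eq_one]
    have g1 : (Int.gcd q0 y1 : ℤ) ∣ q0 := Int.gcd_dvd_left ..
    have g2 : (Int.gcd q0 y1 : ℤ) ∣ y1 := Int.gcd_dvd_right ..
    have g3 : (Int.gcd q0 y1 : ℤ) ∣ y2 := by
      have : IsCoprime (Int.gcd q0 y1 : ℤ) b := hq0b.of_isCoprime_of_dvd_left g1
      apply this.dvd_of_dvd_mul_left
      have h := dvd_sub ((g1.trans hq0q).trans h0d) (g2.mul_left (κ₀ ^ 2 * A))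
      convert h using 1; ring
    have g4 := dvd_tg (g1.trans hq0q) g2 g3
    rw [← ht] at g4
    have := htq.isUnit_of_dvd' g4 g1
    rw [Int.isUnit_iff] at this
    omega
  have hprod : ∀ κ ∈ S, q0 ∣ (κ - κ₀) * (κ + κ₀) := by
    intro κ hκ
    obtain ⟨_, _, hd⟩ := hS κ hκ
    have hc : IsCoprime q0 (A * y1) := hq0A.mul_right hq0y
    apply hc.dvd_of_dvd_mul_left
    have := dvd_sub (hq0q.trans hd) (hq0q.trans h0d)
    convert this using 1; ring
  have hsplit : ∀ κ ∈ S, ∀ d e : ℤ, (Int.gcd (κ - κ₀) q0 : ℤ) = d → q0 = d * e → e ∣ κ + κ₀ := by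
    intro κ hκ d e hd he
    have hc : IsCoprime d e := coprime_of_sqf hs0 he
    have g1 : IsCoprime e (κ - κ₀) := by
      rw [Int.isCoprime_iff_gcd_eq_one]
      have f1 : (Int.gcd e (κ - κ₀) : ℤ) ∣ e := Int.gcd_dvd_left ..
      have f2 : (Int.gcd e (κ - κ₀) : ℤ) ∣ d := by
        rw [← hd]
        exact Int.dvd_coe_gcd (Int.gcd_dvd_right ..) (f1.trans ⟨d, by rw [he]; ring⟩)
      have := hc.isUnit_of_dvd' f2 f1
      rw [Int.isUnit_iff] at this
      omega
    exact g1.dvd_of_dvd_mul_left ((Dvd.intro_left d he.symm).trans (hprod κ hκ))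
  have hcard : ((Finset.Ico 0 t) ×ˢ hfin.toFinset).card = t.toNat * hfin.toFinset.card := by
    rw [Finset.card_product]; simp
  rw [← hcard]
  refine Finset.card_le_card_of_injOn (fun κ => (κ % t, (Int.gcd (κ - κ₀) q0 : ℤ))) ?_ ?_
  · intro κ hκ
    simp only [Finset.coe_product, Set.mem_prod, Finset.coe_Ico, Set.mem_Ico, Finset.mem_coe,
      Set.Finite.mem_toFinset, Set.mem_ofPred_eq]
    exact ⟨⟨Int.emod_nonneg _ htpos.ne', Int.emod_lt_of_pos _ htpos⟩,
      (Int.gcd_dvd_right ..).trans hq0q⟩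
  · intro κ hκ κ' hκ' h
    simp only [Prod.mk.injEq] at h
    obtain ⟨hmod, hg⟩ := h
    obtain ⟨d, hd⟩ : ∃ d : ℤ, (Int.gcd (κ - κ₀) q0 : ℤ) = d := ⟨_, rfl⟩
    have hd' : (Int.gcd (κ' - κ₀) q0 : ℤ) = d := by rw [← hg, hd]
    obtain ⟨e, he⟩ : d ∣ q0 := by rw [← hd]; exact Int.gcd_dvd_right ..
    have a1 := hsplit κ hκ d e hd he
    have a2 := hsplit κ' hκ' d e hd' he
    have b1 : d ∣ κ - κ₀ := by rw [← hd]; exact Int.gcd_dvd_left ..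
    have b2 : d ∣ κ' - κ₀ := by rw [← hd']; exact Int.gcd_dvd_left ..
    have c1 : e ∣ κ - κ' := by
      have := dvd_sub a1 a2
      rwa [show κ + κ₀ - (κ' + κ₀) = κ - κ' by ring] at this
    have c2 : d ∣ κ - κ' := by
      have := dvd_sub b1 b2
      rwa [show κ - κ₀ - (κ' - κ₀) = κ - κ' by ring] at this
    have c3 : q0 ∣ κ - κ' := by
      rw [he]; exact (coprime_of_sqf hs0 he).mul_dvd c2 c1
    have c4 : t ∣ κ - κ' := Int.ModEq.dvd (Int.ModEq.symm hmod)
    have c5 : q ∣ κ - κ' := by rw [hq0]; exact htq.mul_dvd c4 c3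
    obtain ⟨u1, u2, _⟩ := hS κ hκ
    obtain ⟨v1, v2, _⟩ := hS κ' hκ'
    have : κ - κ' = 0 := Int.eq_zero_of_abs_lt_dvd c5 (by rw [abs_lt]; constructor <;> linarith)
    linarith

end EkLem

namespace EkLem

/-- Membership condition for the counted triples. -/
def Cd (A b : ℤ) (X1 X2 Y1 Y2 Y3 R : ℝ) (t : (ℤ × ℤ × ℤ × ℤ) × ℤ × ℤ) : Prop :=
  Squarefree t.2.1 ∧ Y3 / 2 < (t.2.1 : ℝ) ∧ (t.2.1 : ℝ) ≤ Y3 ∧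
    IsCoprime t.2.1 (A * b) ∧
    0 ≤ t.2.2 ∧ t.2.2 < t.2.1 ∧ IsCoprime t.2.2 t.2.1 ∧
    A * t.1.1 ^ 2 * t.1.2.2.1 ^ 3 + b * t.1.2.1 ^ 2 * t.1.2.2.2 ^ 3 ≠ 0 ∧
    Congs A b t.2.1 t.2.2 t.1.1 t.1.2.1 t.1.2.2.1 t.1.2.2.2 ∧
    (|t.1.1| : ℝ) ≤ R * X1 ∧ (|t.1.2.1| : ℝ) ≤ R * X2 ∧
    (|t.1.2.2.1| : ℝ) ≤ R * Y1 ∧ (|t.1.2.2.2| : ℝ) ≤ R * Y2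

/-- Integers of absolute value at most `T`. -/
noncomputable def bx (T : ℝ) : Finset ℤ := Finset.Icc (-⌊T⌋) ⌊T⌋

/-- Nonzero integers of absolute value at most `T`. -/
noncomputable def nz (T : ℝ) : Finset ℤ := (bx T).erase 0

lemma mem_bx {T : ℝ} {x : ℤ} : x ∈ bx T ↔ |(x : ℝ)| ≤ T := by
  unfold bx
  rw [Finset.mem_Icc, ← abs_le, Int.le_floor]
  push_cast; rfl

lemma mem_nz {T : ℝ} {x : ℤ} : x ∈ nz T ↔ x ≠ 0 ∧ |(x : ℝ)| ≤ T := by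
  unfold nz
  rw [Finset.mem_erase, mem_bx]

lemma card_bx {T : ℝ} (hT : 0 ≤ T) : ((bx T).card : ℝ) ≤ 2 * T + 1 := by
  unfold bx
  have h0 : 0 ≤ ⌊T⌋ := Int.floor_nonneg.2 hT
  rw [Int.card_Icc]
  have h1 : (((⌊T⌋ + 1 - -⌊T⌋).toNat : ℤ) : ℝ) = ((⌊T⌋ + 1 - -⌊T⌋ : ℤ) : ℝ) := by
    rw [Int.toNat_of_nonneg (by omega)]
  have h2 := Int.floor_le T
  push_cast at h1
  rw [h1]; linarith

lemma card_nz {T : ℝ} (hT : 0 ≤ T) : ((nz T).card : ℝ) ≤ 2 * T := by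
  have h := card_bx hT
  have h0 : (0 : ℤ) ∈ bx T := by rw [mem_bx]; simpa using hT
  have h1 := Finset.card_erase_add_one h0
  have : ((nz T).card : ℝ) + 1 = (bx T).card := by exact_mod_cast h1
  linarith

lemma one_le_abs {x : ℤ} (h : x ≠ 0) : (1 : ℝ) ≤ |(x : ℝ)| := by
  have := Int.one_le_abs h
  exact_mod_cast this

lemma Cd.pos {A b : ℤ} {X1 X2 Y1 Y2 Y3 R : ℝ} {t} (hY : 0 < Y3)
    (h : Cd A b X1 X2 Y1 Y2 Y3 R t) : 0 < t.2.1 := by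
  have : (0 : ℝ) < t.2.1 := by have := h.2.1; linarith
  exact_mod_cast this

lemma fiber_count {A b : ℤ} {X1 X2 Y1 Y2 Y3 R H N D : ℝ} (hY : 0 < Y3)
    (x1 x2 t m : ℤ)
    (hH1 : R * Y1 ≤ H) (hH2 : R * Y2 ≤ H) (hH3 : Y3 ≤ H) (hD0 : 0 ≤ D)
    (hN : ∀ P : Finset (ℚ × ℚ), (∀ p ∈ P,
        ((18 * A * x1 ^ 2 : ℤ) : ℚ) * p.1 ^ 3 + ((18 * b * x2 ^ 2 : ℤ) : ℚ) * p.2 ^ 3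
          = ((t ^ 2 * m : ℤ) : ℚ) ∧
        ∃ y₁ y₂ q : ℤ, q ≠ 0 ∧ |(y₁ : ℝ)| ≤ H ∧ |(y₂ : ℝ)| ≤ H ∧ |(q : ℝ)| ≤ H ∧
          p.1 * q = y₁ ∧ p.2 * q = y₂) → (P.card : ℝ) ≤ N)
    (hD : ∀ q : ℤ, 0 < q → (q : ℝ) ≤ Y3 → ∃ hf : {x : ℤ | x ∣ q}.Finite,
      (hf.toFinset.card : ℝ) ≤ D)
    (S : Finset ((ℤ × ℤ × ℤ × ℤ) × ℤ × ℤ))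
    (hS : ∀ s ∈ S, Cd A b X1 X2 Y1 Y2 Y3 R s ∧ s.1.1 = x1 ∧ s.1.2.1 = x2 ∧
      tg s.2.1 s.1.2.2.1 s.1.2.2.2 = t ∧
      18 * (A * s.1.1 ^ 2 * s.1.2.2.1 ^ 3 + b * s.1.2.1 ^ 2 * s.1.2.2.2 ^ 3) =
        s.2.1 ^ 3 * t ^ 2 * m) (ht : 0 < t) :
    (S.card : ℝ) ≤ t * D * N := by
  classical
  let f : (ℤ × ℤ × ℤ × ℤ) × ℤ × ℤ → ℚ × ℚ := fun s =>
    ((s.1.2.2.1 : ℚ) / s.2.1, (s.1.2.2.2 : ℚ) / s.2.1)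
  have h1 := Finset.card_le_mul_card_image (f := f) S (t.toNat * ⌊D⌋₊) (by
    intro r hr
    obtain ⟨s₀, hs₀, rfl⟩ := Finset.mem_image.1 hr
    obtain ⟨hc, hx1, hx2, htg, hF⟩ := hS s₀ hs₀
    have hq := hc.pos hY
    obtain ⟨hf, hfD⟩ := hD s₀.2.1 hq hc.2.2.1
    have huniq : ∀ s ∈ S.filter (fun s => f s = f s₀), s₀.2.1 = s.2.1 ∧
        s₀.1.2.2.1 = s.1.2.2.1 ∧ s₀.1.2.2.2 = s.1.2.2.2 := by
      intro s hs
      obtain ⟨hsS, hfs⟩ := Finset.mem_filter.1 hs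
      obtain ⟨hc', hx1', hx2', htg', hF'⟩ := hS s hsS
      have hq' := hc'.pos hY
      have q1 : (s₀.2.1 : ℚ) ≠ 0 := by exact_mod_cast hq.ne'
      have q2 : (s.2.1 : ℚ) ≠ 0 := by exact_mod_cast hq'.ne'
      simp only [f, Prod.mk.injEq] at hfs
      obtain ⟨f1, f2⟩ := hfs
      rw [div_eq_div_iff q2 q1] at f1 f2
      apply q_unique hq hq' (htg.trans htg'.symm)
      · exact_mod_cast f1.symm
      · exact_mod_cast f2.symm
    have hinj : Set.InjOn (fun s : (ℤ × ℤ × ℤ × ℤ) × ℤ × ℤ => s.2.2)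
        (S.filter (fun s => f s = f s₀)) := by
      intro s hs s' hs' hss
      obtain ⟨u1, u2, u3⟩ := huniq s hs
      obtain ⟨v1, v2, v3⟩ := huniq s' hs'
      obtain ⟨_, a1, a2, _⟩ := hS s (Finset.mem_filter.1 hs).1
      obtain ⟨_, b1, b2, _⟩ := hS s' (Finset.mem_filter.1 hs').1
      simp only at hss
      ext
      · rw [a1, b1]
      · rw [a2, b2]
      · rw [← u2, v2]
      · rw [← u3, v3]
      · rw [← u1, v1]
      · exact hss
    rw [← Finset.card_image_of_injOn hinj]
    have hk := kappa_count (A := A) (b := b) (q := s₀.2.1) (y1 := s₀.1.2.2.1) (y2 := s₀.1.2.2.2)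
      hq hc.1 hc.2.2.2.1.of_mul_right_right hc.2.2.2.1.of_mul_right_left
      ((S.filter (fun s => f s = f s₀)).image fun s => s.2.2) (by
        intro κ hκ
        obtain ⟨s, hs, rfl⟩ := Finset.mem_image.1 hκ
        obtain ⟨u1, u2, u3⟩ := huniq s hs
        obtain ⟨hc', _⟩ := hS s (Finset.mem_filter.1 hs).1
        rw [u1, u2, u3]
        exact ⟨hc'.2.2.2.2.1, hc'.2.2.2.2.2.1, hc'.2.2.2.2.2.2.2.2.1.2.1⟩) hf
    rw [htg] at hk
    refine hk.trans (Nat.mul_le_mul_left _ (Nat.le_floor hfD)))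
  have h2 := hN (S.image f) (by
    intro p hp
    obtain ⟨s, hs, rfl⟩ := Finset.mem_image.1 hp
    obtain ⟨hc, hx1, hx2, htg, hF⟩ := hS s hs
    have hq := hc.pos hY
    have q1 : (s.2.1 : ℚ) ≠ 0 := by exact_mod_cast hq.ne'
    have hqr : (0 : ℝ) < s.2.1 := by exact_mod_cast hq
    constructor
    · have hF' := congrArg (fun z : ℤ => (z : ℚ)) hF
      rw [hx1, hx2] at hF'
      push_cast at hF' ⊢
      simp only [f]
      rw [div_pow, div_pow]
      field_simp
      linear_combination hF'
    · refine ⟨s.1.2.2.1, s.1.2.2.2, s.2.1, hq.ne', ?_, ?_, ?_, ?_, ?_⟩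
      · exact hc.2.2.2.2.2.2.2.2.2.2.2.1.trans hH1
      · exact hc.2.2.2.2.2.2.2.2.2.2.2.2.trans hH2
      · rw [abs_of_pos hqr]; exact hc.2.2.1.trans hH3
      · simp only [f]; field_simp
      · simp only [f]; field_simp)
  have h3 : (S.card : ℝ) ≤ ((t.toNat * ⌊D⌋₊ * (S.image f).card : ℕ) : ℝ) := by exact_mod_cast h1
  refine h3.trans ?_
  push_cast
  have h4 : ((t.toNat : ℕ) : ℝ) = t := by
    have := Int.toNat_of_nonneg ht.le
    exact_mod_cast congrArg (fun z : ℤ => (z : ℝ)) this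
  have htr : (0 : ℝ) < t := by exact_mod_cast ht
  rw [h4]
  have := Nat.floor_le hD0
  gcongr

end EkLem

namespace EkLem

lemma card_fib {α β : Type*} [DecidableEq β] (S : Finset α) (T : Finset β) (f : α → β)
    (hf : ∀ s ∈ S, f s ∈ T) (c : β → ℝ)
    (hc : ∀ b ∈ T, ((S.filter (fun s => f s = b)).card : ℝ) ≤ c b) :
    (S.card : ℝ) ≤ ∑ b ∈ T, c b := by
  rw [Finset.card_eq_sum_card_fiberwise (f := f) (t := T) hf]
  push_cast
  exact Finset.sum_le_sum hc

lemma abs_F_le {A b x1 x2 y1 y2 : ℤ} {X1 X2 Y1 Y2 B R : ℝ}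
    (hA : |(A : ℝ)| * (X1 ^ 2 * Y1 ^ 3) ≤ 32 * B) (hb : |(b : ℝ)| * (X2 ^ 2 * Y2 ^ 3) ≤ 32 * B)
    (hR : 0 < R) (h1 : |(x1 : ℝ)| ≤ R * X1) (h2 : |(x2 : ℝ)| ≤ R * X2)
    (h3 : |(y1 : ℝ)| ≤ R * Y1) (h4 : |(y2 : ℝ)| ≤ R * Y2) :
    |((A * x1 ^ 2 * y1 ^ 3 + b * x2 ^ 2 * y2 ^ 3 : ℤ) : ℝ)| ≤ 64 * B * R ^ 5 := by
  push_cast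
  refine (abs_add_le _ _).trans ?_
  rw [abs_mul, abs_mul, abs_pow, abs_pow, abs_mul, abs_mul, abs_pow, abs_pow]
  calc |(A : ℝ)| * |(x1 : ℝ)| ^ 2 * |(y1 : ℝ)| ^ 3 + |(b : ℝ)| * |(x2 : ℝ)| ^ 2 * |(y2 : ℝ)| ^ 3
      ≤ |(A : ℝ)| * (R * X1) ^ 2 * (R * Y1) ^ 3 + |(b : ℝ)| * (R * X2) ^ 2 * (R * Y2) ^ 3 := by
        gcongr
    _ = (|(A : ℝ)| * (X1 ^ 2 * Y1 ^ 3) + |(b : ℝ)| * (X2 ^ 2 * Y2 ^ 3)) * R ^ 5 := by ring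
    _ ≤ (32 * B + 32 * B) * R ^ 5 := by gcongr
    _ = _ := by ring

lemma m_exists {A b : ℤ} {X1 X2 Y1 Y2 Y3 B R : ℝ} (hY : 0 < Y3)
    (hA : |(A : ℝ)| * (X1 ^ 2 * Y1 ^ 3) ≤ 32 * B) (hb : |(b : ℝ)| * (X2 ^ 2 * Y2 ^ 3) ≤ 32 * B)
    (hR : 0 < R) {s} (h : Cd A b X1 X2 Y1 Y2 Y3 R s) :
    ∃ m : ℤ, m ≠ 0 ∧
      |(m : ℝ)| ≤ 9216 * B * R ^ 5 / Y3 ^ 3 / (tg s.2.1 s.1.2.2.1 s.1.2.2.2 : ℝ) ^ 2 ∧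
      18 * (A * s.1.1 ^ 2 * s.1.2.2.1 ^ 3 + b * s.1.2.1 ^ 2 * s.1.2.2.2 ^ 3) =
        s.2.1 ^ 3 * (tg s.2.1 s.1.2.2.1 s.1.2.2.2) ^ 2 * m := by
  have hq := h.pos hY
  obtain ⟨hs, hq1, hq2, hcop, k0, k1, kc, hF, hcong, hx1, hx2, hy1, hy2⟩ := h
  set t := tg s.2.1 s.1.2.2.1 s.1.2.2.2 with ht
  have htp : 0 < t := tg_pos hq
  obtain ⟨⟨q0, e0⟩, ⟨z1, e1⟩, ⟨z2, e2⟩⟩ := tg_dvd s.2.1 s.1.2.2.1 s.1.2.2.2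
  rw [← ht] at e0 e1 e2
  obtain ⟨m, hm⟩ := key_dvd (hcop.of_mul_right_right) kc (coprime_of_sqf hs e0) e0 e1 e2 htp.ne'
    hcong.1 hcong.2.1 hcong.2.2.2.1 hcong.2.2.2.2
  refine ⟨m, ?_, ?_, hm⟩
  · rintro rfl
    rw [mul_zero] at hm
    omega
  · have hFb := abs_F_le hA hb hR hx1 hx2 hy1 hy2
    have htr : (0 : ℝ) < t := by exact_mod_cast htp
    have hqr : (0 : ℝ) < s.2.1 := by exact_mod_cast hq
    have e : |((18 * (A * s.1.1 ^ 2 * s.1.2.2.1 ^ 3 + b * s.1.2.1 ^ 2 * s.1.2.2.2 ^ 3) : ℤ) : ℝ)|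
       = (s.2.1 : ℝ) ^ 3 * (t : ℝ) ^ 2 * |(m : ℝ)| := by
      rw [hm]; push_cast
      rw [abs_mul, abs_of_pos (by positivity)]
    rw [Int.cast_mul, abs_mul] at e
    have e18 : |((18 : ℤ) : ℝ)| = 18 := by norm_num
    rw [e18] at e
    rw [div_div, le_div_iff₀ (by positivity)]
    have h8 : (Y3 / 2) ^ 3 ≤ (s.2.1 : ℝ) ^ 3 := by gcongr
    have h9 : (Y3 / 2) ^ 3 * ((t : ℝ) ^ 2 * |(m : ℝ)|) ≤
        (s.2.1 : ℝ) ^ 3 * ((t : ℝ) ^ 2 * |(m : ℝ)|) := by gcongr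
    nlinarith

theorem main_count (ε : ℝ) (hε : 0 < ε) : ∃ C : ℝ, 0 < C ∧
    ∀ (A b : ℤ) (X1 X2 Y1 Y2 Y3 B R : ℝ), 2 ≤ B → A ≠ 0 → b ≠ 0 →
    1 ≤ X1 → 1 ≤ X2 → 1 ≤ Y1 → 1 ≤ Y2 → 1 ≤ Y3 →
    X1 ≤ B → X2 ≤ B → Y1 ≤ B → Y2 ≤ B → Y3 ≤ B →
    |(A : ℝ)| * (X1 ^ 2 * Y1 ^ 3) ≤ 32 * B → |(b : ℝ)| * (X2 ^ 2 * Y2 ^ 3) ≤ 32 * B →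
    0 < R → R ≤ B → ∀ S : Finset ((ℤ × ℤ × ℤ × ℤ) × ℤ × ℤ),
    (∀ s ∈ S, Cd A b X1 X2 Y1 Y2 Y3 R s ∧ s.1.1 ≠ 0 ∧ s.1.2.1 ≠ 0) →
    (S.card : ℝ) ≤ C * (X1 * X2 * B * R ^ 7 / Y3 ^ 3) * B ^ ε := by
  classical
  obtain ⟨C1, hC1, hdc⟩ := dc_bound (ε / 60) (by positivity)
  obtain ⟨C2, hC2, hdiv⟩ := intData.divisor_bound (ε / 3) (by positivity)
  refine ⟨8 * 9216 * C1 * C2 * (1 + 3 / ε), by positivity, ?_⟩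
  intro A b X1 X2 Y1 Y2 Y3 B R hB hA0 hb0 hX1 hX2 hY1 hY2 hY3 hX1B hX2B hY1B hY2B hY3B hA hb hR hRB
    S hS
  have hB0 : 0 < B := by linarith
  have hB1 : 1 ≤ B := by linarith
  set E := B ^ (ε / 3) with hE
  have hE1 : 1 ≤ E := Real.one_le_rpow hB1 (by positivity)
  set N := C1 * E with hN
  set D := C2 * E with hD
  set M := 9216 * B * R ^ 5 / Y3 ^ 3 with hM
  have hM0 : 0 ≤ M := by positivity
  have hN0 : 0 ≤ N := by positivity
  have hD0 : 0 ≤ D := by positivity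
  have hpow : (B ^ 20) ^ (ε / 60) = E := by
    rw [← Real.rpow_natCast, ← Real.rpow_mul hB0.le, hE]; congr 1; push_cast; ring
  have hBn : ∀ k n : ℕ, k ≤ n → B ^ k ≤ B ^ n := fun k n h => pow_le_pow_right₀ hB1 h
  have h2n : ∀ n : ℕ, (2 : ℝ) ^ n ≤ B ^ n := fun n => pow_le_pow_left₀ (by norm_num) hB n
  have hAB : |(A : ℝ)| ≤ 32 * B := by
    refine le_trans ?_ hA
    have : 1 ≤ X1 ^ 2 * Y1 ^ 3 := one_le_mul_of_one_le_of_one_le (one_le_pow₀ hX1) (one_le_pow₀ hY1)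
    nlinarith [abs_nonneg (A : ℝ)]
  have hbB : |(b : ℝ)| ≤ 32 * B := by
    refine le_trans ?_ hb
    have : 1 ≤ X2 ^ 2 * Y2 ^ 3 := one_le_mul_of_one_le_of_one_le (one_le_pow₀ hX2) (one_le_pow₀ hY2)
    nlinarith [abs_nonneg (b : ℝ)]
  have hRsq : ∀ Z : ℝ, 1 ≤ Z → Z ≤ B → R * Z ≤ B ^ 2 := by
    intro Z h1 h2
    calc R * Z ≤ B * B := by gcongr
      _ = _ := by ring
  have hcoef : ∀ (c x : ℤ), |(c : ℝ)| ≤ 32 * B → |(x : ℝ)| ≤ B ^ 2 →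
      |((18 * c * x ^ 2 : ℤ) : ℝ)| ≤ B ^ 20 := by
    intro c x hc hx
    push_cast
    rw [abs_mul, abs_mul, abs_pow, abs_of_pos (by norm_num : (0 : ℝ) < 18)]
    calc 18 * |(c : ℝ)| * |(x : ℝ)| ^ 2 ≤ 18 * (32 * B) * (B ^ 2) ^ 2 := by gcongr
      _ = 576 * B ^ 5 := by ring
      _ ≤ 2 ^ 15 * B ^ 5 := by gcongr; norm_num
      _ ≤ B ^ 15 * B ^ 5 := by gcongr
      _ = B ^ 20 := by ring
  have hMB : M ≤ B ^ 20 := by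
    calc M ≤ 9216 * B * R ^ 5 / 1 := by
          rw [hM]; gcongr; exact one_le_pow₀ hY3
      _ = 9216 * B * R ^ 5 := by ring
      _ ≤ 2 ^ 14 * B * B ^ 5 := by gcongr; norm_num
      _ ≤ B ^ 14 * B * B ^ 5 := by gcongr
      _ = B ^ 20 := by ring
  have hDq : ∀ q : ℤ, 0 < q → (q : ℝ) ≤ Y3 → ∃ hf : {x : ℤ | x ∣ q}.Finite,
      (hf.toFinset.card : ℝ) ≤ D := by
    intro q hq hqY
    obtain ⟨hf, hcard⟩ := hdiv q hq.ne'
    refine ⟨hf, ?_⟩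
    rw [← Set.ncard_eq_toFinset_card _ hf]
    refine hcard.trans ?_
    rw [hD]
    gcongr
    rw [hE]
    have e : intData.N q = |(q : ℝ)| := rfl
    rw [e]
    have hqr : (0 : ℝ) < q := by exact_mod_cast hq
    rw [abs_of_pos hqr]
    exact Real.rpow_le_rpow hqr.le (hqY.trans hY3B) (by positivity)
  let f : (ℤ × ℤ × ℤ × ℤ) × ℤ × ℤ → ℤ × ℤ × ℕ := fun s =>
    (s.1.1, s.1.2.1, (tg s.2.1 s.1.2.2.1 s.1.2.2.2).toNat)
  have hY30 : 0 < Y3 := by linarith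
  have hstep := card_fib S (nz (R * X1) ×ˢ nz (R * X2) ×ˢ Finset.Icc 1 ⌊Y3⌋₊) f (by
    intro s hs
    obtain ⟨hc, n1, n2⟩ := hS s hs
    have hq := hc.pos hY30
    simp only [f, Finset.mem_product, mem_nz, Finset.mem_Icc]
    have htp := tg_pos (y1 := s.1.2.2.1) (y2 := s.1.2.2.2) hq
    have htl := tg_le (y1 := s.1.2.2.1) (y2 := s.1.2.2.2) hq
    refine ⟨⟨n1, hc.2.2.2.2.2.2.2.2.2.1⟩, ⟨n2, hc.2.2.2.2.2.2.2.2.2.2.1⟩, by omega, ?_⟩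
    apply Nat.le_floor
    have h1 : (((tg s.2.1 s.1.2.2.1 s.1.2.2.2).toNat : ℤ) : ℝ) ≤ ((s.2.1 : ℤ) : ℝ) := by
      exact_mod_cast (by omega : ((tg s.2.1 s.1.2.2.1 s.1.2.2.2).toNat : ℤ) ≤ s.2.1)
    have h2 := hc.2.2.1
    push_cast at h1
    linarith)
    (fun p => 2 * M * D * N * (p.2.2 : ℝ)⁻¹) (by
    rintro ⟨x1, x2, t⟩ hp
    simp only [Finset.mem_product, mem_nz, Finset.mem_Icc] at hp
    obtain ⟨⟨hx10, hx1⟩, ⟨hx20, hx2⟩, ht1, htY⟩ := hp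
    have htr : (0 : ℝ) < t := by exact_mod_cast ht1
    set S' := S.filter (fun s => f s = (x1, x2, t)) with hS'
    have hS'm : ∀ s ∈ S', Cd A b X1 X2 Y1 Y2 Y3 R s ∧ s.1.1 = x1 ∧ s.1.2.1 = x2 ∧
        tg s.2.1 s.1.2.2.1 s.1.2.2.2 = (t : ℤ) := by
      intro s hs
      obtain ⟨h1, h2⟩ := Finset.mem_filter.1 hs
      obtain ⟨hc, _⟩ := hS s h1
      simp only [f, Prod.mk.injEq] at h2
      have := tg_pos (y1 := s.1.2.2.1) (y2 := s.1.2.2.2) (hc.pos hY30)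
      exact ⟨hc, h2.1, h2.2.1, by omega⟩
    have hex : ∀ s : (ℤ × ℤ × ℤ × ℤ) × ℤ × ℤ, ∃ m : ℤ, s ∈ S' → (m ≠ 0 ∧
      |(m : ℝ)| ≤ M / (t : ℝ) ^ 2 ∧
      18 * (A * s.1.1 ^ 2 * s.1.2.2.1 ^ 3 + b * s.1.2.1 ^ 2 * s.1.2.2.2 ^ 3) =
        s.2.1 ^ 3 * (t : ℤ) ^ 2 * m) := by
      intro s
      by_cases hs : s ∈ S'
      · obtain ⟨hc, _, _, htt⟩ := hS'm s hs
        obtain ⟨m, h1, h2, h3⟩ := m_exists hY30 hA hb hR hc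
        rw [htt] at h2 h3
        exact ⟨m, fun _ => ⟨h1, by exact_mod_cast h2, h3⟩⟩
      · exact ⟨0, fun h => absurd h hs⟩
    choose g hg using hex
    have hin := card_fib S' (nz (M / (t : ℝ) ^ 2)) g (fun s hs => mem_nz.2 ⟨(hg s hs).1, (hg s hs).2.1⟩)
      (fun _ => t * D * N) (by
      intro m hm
      obtain ⟨hm0, hmM⟩ := mem_nz.1 hm
      have := fiber_count (A := A) (b := b) (X1 := X1) (X2 := X2) (Y1 := Y1) (Y2 := Y2) (R := R)
        (H := B ^ 20) (N := N) (D := D) hY30 x1 x2 t m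
        ((hRsq _ hY1 hY1B).trans (hBn _ _ (by norm_num)))
        ((hRsq _ hY2 hY2B).trans (hBn _ _ (by norm_num)))
        (hY3B.trans (by simpa using hBn 1 20 (by norm_num))) hD0 (by
          intro P hP
          have h1 := hdc (B ^ 20) (one_le_pow₀ hB1) (18 * A * x1 ^ 2) (18 * b * x2 ^ 2) (t ^ 2 * m)
            (mul_ne_zero (mul_ne_zero (by norm_num) hA0) (pow_ne_zero 2 hx10))
            (mul_ne_zero (mul_ne_zero (by norm_num) hb0) (pow_ne_zero 2 hx20))
            (mul_ne_zero (pow_ne_zero 2 (by omega)) hm0)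
            (hcoef A x1 hAB (hx1.trans (hRsq _ hX1 hX1B)))
            (hcoef b x2 hbB (hx2.trans (hRsq _ hX2 hX2B)))
            (by
              push_cast
              rw [abs_mul, abs_of_pos (by positivity)]
              rw [le_div_iff₀ (by positivity)] at hmM
              linarith) P hP
          rwa [hpow] at h1) hDq
        (S'.filter (fun s => g s = m)) (by
          intro s hs
          obtain ⟨h1, h2⟩ := Finset.mem_filter.1 hs
          obtain ⟨c1, c2, c3, c4⟩ := hS'm s h1
          refine ⟨c1, c2, c3, c4, ?_⟩
          rw [← h2]; exact (hg s h1).2.2) (by omega)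
      exact_mod_cast this)
    refine hin.trans ?_
    rw [Finset.sum_const, nsmul_eq_mul]
    have hcz := card_nz (T := M / (t : ℝ) ^ 2) (by positivity)
    calc ((nz (M / (t : ℝ) ^ 2)).card : ℝ) * (t * D * N) ≤ (2 * (M / (t : ℝ) ^ 2)) * (t * D * N) := by
          gcongr
      _ = 2 * M * D * N * (t : ℝ)⁻¹ := by field_simp)
  refine hstep.trans ?_
  rw [Finset.sum_product]
  simp only [Finset.sum_product, Finset.sum_const, nsmul_eq_mul, ← Finset.mul_sum]
  have hharm := harmonic_floor_le_one_add_log Y3 hY3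
  rw [harmonic_eq_sum_Icc] at hharm
  push_cast at hharm
  have hlog : 1 + Real.log Y3 ≤ (1 + 3 / ε) * E := by
    have h1 := Real.log_le_rpow_div hY30.le (show 0 < ε / 3 by positivity)
    have h2 : Y3 ^ (ε / 3) ≤ E := Real.rpow_le_rpow hY30.le hY3B (by positivity)
    have h3 : Y3 ^ (ε / 3) / (ε / 3) ≤ E / (ε / 3) := by gcongr
    have h4 : E / (ε / 3) = 3 / ε * E := by field_simp
    linarith
  have hE3 : E * E * E = B ^ ε := by
    rw [hE, ← Real.rpow_add hB0, ← Real.rpow_add hB0]; congr 1; ring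
  have z1 := card_nz (T := R * X1) (by positivity)
  have z2 := card_nz (T := R * X2) (by positivity)
  calc ((nz (R * X1)).card : ℝ) * (2 * M * D * N *
        (((nz (R * X2)).card : ℝ) * ∑ i ∈ Finset.Icc 1 ⌊Y3⌋₊, (i : ℝ)⁻¹))
      ≤ (2 * (R * X1)) * (2 * M * D * N * ((2 * (R * X2)) * ((1 + 3 / ε) * E))) := by
        gcongr
        exact hharm.trans hlog
    _ = 8 * 9216 * C1 * C2 * (1 + 3 / ε) * (X1 * X2 * B * R ^ 7 / Y3 ^ 3) * (E * E * E) := by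
        rw [hM, hD, hN]; ring
    _ = _ := by rw [hE3]

end EkLem

namespace EkLem

lemma class_count {q z0 : ℤ} {T Y3 : ℝ} (hY : 0 < Y3) (hT : 0 ≤ T) (hq : Y3 / 2 < q)
    (S : Finset ℤ) (hS : ∀ z ∈ S, |(z : ℝ)| ≤ T ∧ q ∣ z - z0) :
    (S.card : ℝ) ≤ 4 * T / Y3 + 1 := by
  have hq0 : (0 : ℝ) < q := by linarith
  have hqz : q ≠ 0 := by rintro rfl; simp at hq0
  set lo : ℝ := (-T - z0) / q with hlo
  set hi : ℝ := (T - z0) / q with hhi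
  have hlh : lo ≤ hi := by rw [hlo, hhi]; gcongr; linarith
  have h1 : S.card ≤ (Finset.Icc ⌈lo⌉ ⌊hi⌋).card := by
    refine Finset.card_le_card_of_injOn (fun z => (z - z0) / q) ?_ ?_
    · intro z hz
      obtain ⟨h1, w, hw⟩ := hS z hz
      have hwr : (z : ℝ) - z0 = q * w := by exact_mod_cast hw
      have h2 := abs_le.1 h1
      simp only [Finset.coe_Icc, Set.mem_Icc]
      rw [hw, Int.mul_ediv_cancel_left _ hqz, Int.ceil_le, Int.le_floor, hlo, hhi,
        div_le_iff₀ hq0, le_div_iff₀ hq0]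
      constructor <;> linarith
    · intro z hz z' hz' h
      obtain ⟨_, w, hw⟩ := hS z hz
      obtain ⟨_, w', hw'⟩ := hS z' hz'
      simp only at h
      rw [hw, hw', Int.mul_ediv_cancel_left _ hqz, Int.mul_ediv_cancel_left _ hqz] at h
      rw [h] at hw
      linarith
  have h2 : ((Finset.Icc ⌈lo⌉ ⌊hi⌋).card : ℝ) ≤ hi - lo + 1 := by
    rw [Int.card_Icc]
    have a1 := Int.floor_le hi
    have a2 := Int.le_ceil lo
    rcases le_or_gt 0 (⌊hi⌋ + 1 - ⌈lo⌉) with h | h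
    · have h3 : (((⌊hi⌋ + 1 - ⌈lo⌉).toNat : ℤ) : ℝ) = ((⌊hi⌋ + 1 - ⌈lo⌉ : ℤ) : ℝ) := by
        rw [Int.toNat_of_nonneg h]
      push_cast at h3
      rw [h3]; linarith
    · rw [Int.toNat_of_nonpos h.le]; push_cast; linarith
  have h3 : hi - lo ≤ 4 * T / Y3 := by
    have : hi - lo = 2 * T / q := by rw [hhi, hlo]; ring
    rw [this, div_le_div_iff₀ hq0 hY]
    nlinarith
  have : (S.card : ℝ) ≤ (Finset.Icc ⌈lo⌉ ⌊hi⌋).card := by exact_mod_cast h1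
  linarith

lemma deg_count {α : Type*} (S : Finset α) (x y z q κ : α → ℤ) {X Y Z Y3 R : ℝ}
    (hX : 0 < X) (hY : 0 < Y) (hZ : 0 < Z) (hY3 : 0 < Y3) (hR : 0 < R)
    (hS : ∀ s ∈ S, Y3 / 2 < (q s : ℝ) ∧ (q s : ℝ) ≤ Y3 ∧ 0 ≤ κ s ∧ κ s < q s ∧
      x s ≠ 0 ∧ q s ∣ x s ∧ |(x s : ℝ)| ≤ R * X ∧ y s ≠ 0 ∧ |(y s : ℝ)| ≤ R * Y ∧
      |(z s : ℝ)| ≤ R * Z)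
    (hz : ∀ s ∈ S, ∀ s' ∈ S, q s = q s' → κ s = κ s' → y s = y s' → q s ∣ z s' - z s)
    (hinj : ∀ s ∈ S, ∀ s' ∈ S, x s = x s' → y s = y s' → z s = z s' → q s = q s' → κ s = κ s' →
      s = s') :
    (S.card : ℝ) ≤ 8 * R ^ 2 * X * Y * Y3 * (4 * (R * Z) / Y3 + 1) := by
  classical
  have hqpos : ∀ s ∈ S, 0 < q s := by
    intro s hs
    have := (hS s hs).1
    have : (0 : ℝ) < q s := by linarith
    exact_mod_cast this
  let f : α → ℤ × ℤ × ℤ × ℤ := fun s => (q s, κ s, x s / q s, y s)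
  have h := card_fib S (Finset.Icc 1 ⌊Y3⌋ ×ˢ Finset.Ico 0 ⌊Y3⌋ ×ˢ nz (2 * R * X / Y3) ×ˢ nz (R * Y))
    f (by
      intro s hs
      have hp := hqpos s hs
      obtain ⟨h1, h2, h3, h4, h5, ⟨w, hw⟩, h7, h8, h9, h10⟩ := hS s hs
      have hfl : q s ≤ ⌊Y3⌋ := Int.le_floor.2 h2
      simp only [f, Finset.mem_product, Finset.mem_Icc, Finset.mem_Ico, mem_nz]
      refine ⟨⟨by omega, hfl⟩, ⟨h3, by omega⟩, ⟨?_, ?_⟩, h8, h9⟩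
      · rw [hw, Int.mul_ediv_cancel_left _ hp.ne']
        rintro rfl
        simp at hw; exact h5 hw
      · rw [hw, Int.mul_ediv_cancel_left _ hp.ne']
        rw [le_div_iff₀ hY3]
        have hpr : (0 : ℝ) < q s := by exact_mod_cast hp
        rw [hw] at h7
        push_cast at h7
        rw [abs_mul, abs_of_pos hpr] at h7
        nlinarith [abs_nonneg (w : ℝ)]) (fun _ => 4 * (R * Z) / Y3 + 1) (by
      rintro ⟨q', κ', x', y'⟩ -
      rcases (S.filter (fun s => f s = (q', κ', x', y'))).eq_empty_or_nonempty with he | ⟨s₀, hs₀⟩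
      · rw [he]; simp; positivity
      have hmem : ∀ s ∈ S.filter (fun s => f s = (q', κ', x', y')), s ∈ S ∧ q s = q' ∧ κ s = κ' ∧
          x s / q s = x' ∧ y s = y' := by
        intro s hs
        obtain ⟨h1, h2⟩ := Finset.mem_filter.1 hs
        simp only [f, Prod.mk.injEq] at h2
        exact ⟨h1, h2⟩
      have hi : Set.InjOn z (S.filter (fun s => f s = (q', κ', x', y'))) := by
        intro s hs s' hs' hzz
        obtain ⟨a0, a1, a2, a3, a4⟩ := hmem s hs
        obtain ⟨b0, b1, b2, b3, b4⟩ := hmem s' hs'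
        refine hinj s a0 s' b0 ?_ (a4.trans b4.symm) hzz (a1.trans b1.symm) (a2.trans b2.symm)
        have e1 := Int.mul_ediv_cancel' (hS s a0).2.2.2.2.2.1
        have e2 := Int.mul_ediv_cancel' (hS s' b0).2.2.2.2.2.1
        rw [← e1, ← e2, a3, b3, a1, b1]
      rw [← Finset.card_image_of_injOn hi]
      obtain ⟨c0, c1, c2, c3, c4⟩ := hmem s₀ hs₀
      apply class_count (q := q') (z0 := z s₀) hY3 (by positivity)
      · rw [← c1]; exact (hS s₀ c0).1
      · intro w hw
        obtain ⟨s, hs, rfl⟩ := Finset.mem_image.1 hw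
        obtain ⟨a0, a1, a2, a3, a4⟩ := hmem s hs
        refine ⟨(hS s a0).2.2.2.2.2.2.2.2.2, ?_⟩
        rw [← c1]
        exact hz s₀ c0 s a0 (c1.trans a1.symm) (c2.trans a2.symm) (c4.trans a4.symm))
  refine h.trans ?_
  rw [Finset.sum_const, nsmul_eq_mul, Finset.card_product, Finset.card_product,
    Finset.card_product]
  push_cast
  have hfl0 : (0 : ℤ) ≤ ⌊Y3⌋ := Int.floor_nonneg.2 hY3.le
  have i1 : ((Finset.Icc 1 ⌊Y3⌋).card : ℝ) ≤ Y3 := by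
    rw [Int.card_Icc, show ⌊Y3⌋ + 1 - 1 = ⌊Y3⌋ by ring]
    have : ((⌊Y3⌋.toNat : ℤ) : ℝ) = (⌊Y3⌋ : ℝ) := by rw [Int.toNat_of_nonneg hfl0]
    push_cast at this
    rw [this]; exact Int.floor_le _
  have i2 : ((Finset.Ico 0 ⌊Y3⌋).card : ℝ) ≤ Y3 := by
    rw [Int.card_Ico, sub_zero]
    have : ((⌊Y3⌋.toNat : ℤ) : ℝ) = (⌊Y3⌋ : ℝ) := by rw [Int.toNat_of_nonneg hfl0]
    push_cast at this
    rw [this]; exact Int.floor_le _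
  have i3 := card_nz (T := 2 * R * X / Y3) (by positivity)
  have i4 := card_nz (T := R * Y) (by positivity)
  calc _ ≤ (Y3 * (Y3 * ((2 * (2 * R * X / Y3)) * (2 * (R * Y))))) * (4 * (R * Z) / Y3 + 1) := by
        gcongr
    _ = _ := by field_simp; ring

/-- The numerical comparison in the degenerate case. -/
lemma deg_compare {β s X Y Z Y3 R : ℝ} (hβ : 1 ≤ β) (hs : 1 ≤ s * β ^ 114)
    (hX0 : 1 ≤ X) (hY0 : 1 ≤ Y) (hZ0 : 1 ≤ Z) 
    (hX : X ≤ β ^ 39) (hY : Y ≤ β ^ 38) (hZ : Z ≤ β ^ 38) (hY3 : β ^ 34 ≤ Y3)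
    (hR : 0 < R) (hRX : Y3 ≤ 2 * (R * X)) :
    8 * R ^ 2 * X * Y * Y3 * (4 * (R * Z) / Y3 + 1) ≤
      768 * (s * R ^ 7 * β ^ 360 / Y3 ^ 3) := by
  have hβ0 : 0 < β := by linarith
  have hY30 : 0 < Y3 := lt_of_lt_of_le (by positivity) hY3
  have hs0 : 0 < s := by
    by_contra h
    push Not at h
    have : s * β ^ 114 ≤ 0 := mul_nonpos_of_nonpos_of_nonneg h (by positivity)
    linarith
  have hsβ : β ^ 280 ≤ s * (Y3 * β ^ 360) := by
    calc β ^ 280 ≤ β ^ 280 * (s * β ^ 114) := le_mul_of_one_le_right (by positivity) hs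
      _ = s * (β ^ 34 * β ^ 360) := by ring
      _ ≤ _ := by gcongr
  -- first term
  have t1 : 8 * R ^ 2 * X * Y * Y3 ≤ 256 * (s * R ^ 7 * β ^ 360 / Y3 ^ 3) := by
    have h1 : X ^ 6 * Y ≤ β ^ 280 := by
      calc X ^ 6 * Y ≤ (β ^ 39) ^ 6 * β ^ 38 := by gcongr
        _ = β ^ 272 := by ring
        _ ≤ β ^ 280 := pow_le_pow_right₀ hβ (by norm_num)
    have h2 : Y3 ^ 5 ≤ (2 * (R * X)) ^ 5 := by gcongr
    have h3 : X * Y * Y3 ^ 4 ≤ 32 * s * R ^ 5 * β ^ 360 := by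
      have h4 : X ^ 6 * Y * Y3 ^ 5 ≤ (s * (Y3 * β ^ 360)) * (2 * (R * X)) ^ 5 := by
        have := h1.trans hsβ
        gcongr
      have h5 : (X ^ 5 * Y3) * (X * Y * Y3 ^ 4) ≤ (X ^ 5 * Y3) * (32 * s * R ^ 5 * β ^ 360) := by
        calc _ = X ^ 6 * Y * Y3 ^ 5 := by ring
          _ ≤ _ := h4
          _ = _ := by ring
      exact le_of_mul_le_mul_left h5 (by positivity)
    rw [← mul_div_assoc, le_div_iff₀ (by positivity)]
    calc 8 * R ^ 2 * X * Y * Y3 * Y3 ^ 3 = 8 * R ^ 2 * (X * Y * Y3 ^ 4) := by ring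
      _ ≤ 8 * R ^ 2 * (32 * s * R ^ 5 * β ^ 360) := by gcongr
      _ = _ := by ring
  have t2 : 32 * R ^ 3 * X * Y * Z ≤ 512 * (s * R ^ 7 * β ^ 360 / Y3 ^ 3) := by
    have h1 : X ^ 5 * Y * Z ≤ β ^ 280 := by
      calc X ^ 5 * Y * Z ≤ (β ^ 39) ^ 5 * β ^ 38 * β ^ 38 := by gcongr
        _ = β ^ 271 := by ring
        _ ≤ β ^ 280 := pow_le_pow_right₀ hβ (by norm_num)
    have h2 : Y3 ^ 4 ≤ (2 * (R * X)) ^ 4 := by gcongr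
    have h3 : X * Y * Z * Y3 ^ 3 ≤ 16 * s * R ^ 4 * β ^ 360 := by
      have h4 : X ^ 5 * Y * Z * Y3 ^ 4 ≤ (s * (Y3 * β ^ 360)) * (2 * (R * X)) ^ 4 := by
        have := h1.trans hsβ
        gcongr
      have h5 : (X ^ 4 * Y3) * (X * Y * Z * Y3 ^ 3) ≤ (X ^ 4 * Y3) * (16 * s * R ^ 4 * β ^ 360) := by
        calc _ = X ^ 5 * Y * Z * Y3 ^ 4 := by ring
          _ ≤ _ := h4
          _ = _ := by ring
      exact le_of_mul_le_mul_left h5 (by positivity)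
    rw [← mul_div_assoc, le_div_iff₀ (by positivity)]
    calc 32 * R ^ 3 * X * Y * Z * Y3 ^ 3 = 32 * R ^ 3 * (X * Y * Z * Y3 ^ 3) := by ring
      _ ≤ 32 * R ^ 3 * (16 * s * R ^ 4 * β ^ 360) := by gcongr
      _ = _ := by ring
  calc _ = 32 * R ^ 3 * X * Y * Z + 8 * R ^ 2 * X * Y * Y3 := by field_simp; ring
    _ ≤ _ := by linarith

/-- The trivial count. -/
lemma triv_count {A b : ℤ} {X1 X2 Y1 Y2 Y3 R : ℝ} (hX1 : 1 ≤ X1) (hX2 : 1 ≤ X2)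
    (hY1 : 1 ≤ Y1) (hY2 : 1 ≤ Y2) (hY3 : 1 ≤ Y3) (hR : 1 ≤ R)
    (S : Finset ((ℤ × ℤ × ℤ × ℤ) × ℤ × ℤ)) (hS : ∀ s ∈ S, Cd A b X1 X2 Y1 Y2 Y3 R s) :
    (S.card : ℝ) ≤ 729 * R ^ 4 * X1 * X2 * Y1 * Y2 * Y3 ^ 2 := by
  have h : S ⊆ (bx (R * X1) ×ˢ bx (R * X2) ×ˢ bx (R * Y1) ×ˢ bx (R * Y2)) ×ˢ bx Y3 ×ˢ bx Y3 := by
    intro s hs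
    have hc := hS s hs
    have hq := hc.pos (by linarith)
    obtain ⟨_, h1, h2, _, h3, h4, _, _, _, h5, h6, h7, h8⟩ := hc
    have hqr : (0 : ℝ) < s.2.1 := by exact_mod_cast hq
    have h3r : (0 : ℝ) ≤ s.2.2 := by exact_mod_cast h3
    have h4r : (s.2.2 : ℝ) < s.2.1 := by exact_mod_cast h4
    simp only [Finset.mem_product, mem_bx]
    refine ⟨⟨h5, h6, h7, h8⟩, ?_, ?_⟩
    · rw [abs_of_pos hqr]; exact h2
    · rw [abs_of_nonneg h3r]; linarith
  have h1 := Finset.card_le_card h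
  simp only [Finset.card_product] at h1
  have h2 : (S.card : ℝ) ≤ ((bx (R * X1)).card * ((bx (R * X2)).card * ((bx (R * Y1)).card *
    (bx (R * Y2)).card))) * ((bx Y3).card * (bx Y3).card) := by exact_mod_cast h1
  have hb : ∀ T : ℝ, 1 ≤ T → ((bx T).card : ℝ) ≤ 3 * T := by
    intro T hT
    have := card_bx (T := T) (by linarith)
    linarith
  have hm : ∀ T : ℝ, 1 ≤ T → 1 ≤ R * T := fun T hT => one_le_mul_of_one_le_of_one_le hR hT
  have b1 := hb _ (hm _ hX1)
  have b2 := hb _ (hm _ hX2)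
  have b3 := hb _ (hm _ hY1)
  have b4 := hb _ (hm _ hY2)
  have b5 := hb _ hY3
  refine h2.trans ?_
  calc _ ≤ ((3 * (R * X1)) * ((3 * (R * X2)) * ((3 * (R * Y1)) * (3 * (R * Y2))))) *
        ((3 * Y3) * (3 * Y3)) := by gcongr
    _ = _ := by ring

end EkLem

/-- Compare nonnegative reals through their squares. -/
lemma EkLem.le_of_sq {x y : ℝ} (h : x ^ 2 ≤ y ^ 2) (hy : 0 ≤ y) : x ≤ y :=
  le_of_abs_le ((sq_le_sq.1 h).trans (abs_of_nonneg hy).le)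

/-- For every `ε > 0` there is a constant `C(ε)` such that for every real `R > 0` the number
of triples `(g, q, κ)`, where `(q, κ)` is an admissible pair (with `κ` the canonical
representative of a residue class modulo `q`) and `g = (x₁, x₂, y₁, y₂) ∈ ℤ⁴` satisfies
`a₁x₁²y₁³ + a₂x₂²y₂³ ≠ 0`, the congruences (c1)–(c4), and
`max(|x₁|/X₁, |x₂|/X₂, |y₁|/Y₁, |y₂|/Y₂) ≤ R`, is at most
`C(ε) (Y₁Y₂)^{-3/2} Y₃^{-3} R⁷ B^{2 + ε}`. -/
theorem generator_count_bound (ε : ℝ) (hε : 0 < ε) :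
    ∃ C : ℝ, 0 < C ∧ ∀ (a : Fin 3 → ℤ) (X Y : Fin 3 → ℝ) (B : ℝ),
      2 ≤ B → (∀ i, a i ≠ 0) → (∀ i, Squarefree (a i)) →
      (∀ i j, i ≠ j → IsCoprime (a i) (a j)) →
      (∀ i, 1 ≤ X i) → (∀ i, 1 ≤ Y i) →
      (∀ i, X i ^ 2 * Y i ^ 3 ≤ 32 * B / |(a i : ℝ)|) →
      (∀ i, B ^ ((1 : ℝ) / 5 - 1 / 60) ≤ X i ∧ X i ≤ B ^ ((1 : ℝ) / 5 + 1 / 60)) →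
      (∀ i, B ^ ((1 : ℝ) / 5 - 1 / 90) ≤ Y i ∧ Y i ≤ B ^ ((1 : ℝ) / 5 + 1 / 90)) →
      ∀ R : ℝ, 0 < R →
        (({t : (ℤ × ℤ × ℤ × ℤ) × ℤ × ℤ |
            Squarefree t.2.1 ∧ Y 2 / 2 < (t.2.1 : ℝ) ∧ (t.2.1 : ℝ) ≤ Y 2 ∧
            IsCoprime t.2.1 (a 0 * a 1) ∧
            0 ≤ t.2.2 ∧ t.2.2 < t.2.1 ∧ IsCoprime t.2.2 t.2.1 ∧
            a 0 * t.1.1 ^ 2 * t.1.2.2.1 ^ 3 + a 1 * t.1.2.1 ^ 2 * t.1.2.2.2 ^ 3 ≠ 0 ∧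
            Congs (a 0) (a 1) t.2.1 t.2.2 t.1.1 t.1.2.1 t.1.2.2.1 t.1.2.2.2 ∧
            (|t.1.1| : ℝ) ≤ R * X 0 ∧ (|t.1.2.1| : ℝ) ≤ R * X 1 ∧
            (|t.1.2.2.1| : ℝ) ≤ R * Y 0 ∧ (|t.1.2.2.2| : ℝ) ≤ R * Y 1}).ncard : ℝ) ≤
          C * (Y 0 * Y 1) ^ (-(3 : ℝ) / 2) * Y 2 ^ (-3 : ℝ) * R ^ 7 * B ^ (2 + ε) := by
  obtain ⟨C0, hC0, hmain⟩ := EkLem.main_count ε hε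
  refine ⟨32 * C0 + 1536 + 32 * 729, by positivity, ?_⟩
  intro a X Y B hB ha _ _ hX1 hY1 haXY hXB hYB R hR
  have hB0 : 0 < B := by linarith
  have hB1 : 1 ≤ B := by linarith
  -- the scale `β = B^{1/180}`
  obtain ⟨β, hβdef⟩ : ∃ β : ℝ, β = B ^ ((1 : ℝ) / 180) := ⟨_, rfl⟩
  have hβ : 1 ≤ β := by rw [hβdef]; exact Real.one_le_rpow hB1 (by norm_num)
  have hβ0 : 0 < β := by linarith
  have hβpow : ∀ n : ℕ, B ^ ((n : ℝ) / 180) = β ^ n := by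
    intro n
    rw [hβdef, ← Real.rpow_natCast, ← Real.rpow_mul hB0.le]; congr 1; ring
  have hβ180 : β ^ 180 = B := by
    rw [← hβpow]; norm_num
  have hXu : ∀ i, X i ≤ β ^ 39 := by
    intro i
    rw [← hβpow]; convert (hXB i).2 using 2; norm_num
  have hYu : ∀ i, Y i ≤ β ^ 38 := by
    intro i
    rw [← hβpow]; convert (hYB i).2 using 2; norm_num
  have hYl : ∀ i, β ^ 34 ≤ Y i := by
    intro i
    rw [← hβpow]; convert (hYB i).1 using 2; norm_num
  have hY0 : ∀ i, 0 < Y i := fun i => by linarith [hY1 i]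
  have hX0 : ∀ i, 0 < X i := fun i => by linarith [hX1 i]
  have hXleB : ∀ i, X i ≤ B := fun i => by
    refine (hXu i).trans ?_
    rw [← hβ180]; exact pow_le_pow_right₀ hβ (by norm_num)
  have hYleB : ∀ i, Y i ≤ B := fun i => by
    refine (hYu i).trans ?_
    rw [← hβ180]; exact pow_le_pow_right₀ hβ (by norm_num)
  have haabs : ∀ i, 1 ≤ |(a i : ℝ)| := fun i => EkLem.one_le_abs (ha i)
  have haXY' : ∀ i, |(a i : ℝ)| * (X i ^ 2 * Y i ^ 3) ≤ 32 * B := by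
    intro i
    have h := haXY i
    rw [le_div_iff₀ (by linarith [haabs i])] at h
    linarith
  have hXY : ∀ i, X i ^ 2 * Y i ^ 3 ≤ 32 * B := by
    intro i
    refine le_trans ?_ (haXY' i)
    have h1 : 0 < X i ^ 2 * Y i ^ 3 := mul_pos (pow_pos (hX0 i) 2) (pow_pos (hY0 i) 3)
    nlinarith [haabs i]
  -- the factor `s = (Y₁Y₂)^{-3/2}`
  obtain ⟨s, hs⟩ : ∃ s : ℝ, s = (Y 0 * Y 1) ^ (-(3 : ℝ) / 2) := ⟨_, rfl⟩
  have hYY : 0 < Y 0 * Y 1 := mul_pos (hY0 0) (hY0 1)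
  have hs0 : 0 < s := by rw [hs]; exact Real.rpow_pos_of_pos hYY _
  have hs2 : s ^ 2 * (Y 0 * Y 1) ^ 3 = 1 := by
    rw [hs, ← Real.rpow_natCast, ← Real.rpow_mul hYY.le, ← Real.rpow_natCast,
      ← Real.rpow_add hYY]
    norm_num
  have hsβ : 1 ≤ s * β ^ 114 := by
    have h1 : (1 : ℝ) ^ 2 ≤ (s * β ^ 114) ^ 2 := by
      calc (1 : ℝ) ^ 2 = s ^ 2 * (Y 0 * Y 1) ^ 3 := by rw [hs2]; norm_num
        _ ≤ s ^ 2 * (β ^ 38 * β ^ 38) ^ 3 := by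
          have h0 := hYu 0
          have h1 := hYu 1
          have h2 := hY0 0
          have h3 := hY0 1
          gcongr
        _ = _ := by ring
    exact EkLem.le_of_sq h1 (by positivity)
  have hXX : X 0 * X 1 ≤ 32 * B * s := by
    refine EkLem.le_of_sq ?_ (by positivity)
    have h1 : (X 0 ^ 2 * Y 0 ^ 3) * (X 1 ^ 2 * Y 1 ^ 3) ≤ (32 * B) * (32 * B) := by
      have h2 := hXY 0
      have h3 := hXY 1
      have h4 := hX0 1
      have h5 := hY0 1
      gcongr
    calc (X 0 * X 1) ^ 2 = (X 0 * X 1) ^ 2 * (s ^ 2 * (Y 0 * Y 1) ^ 3) := by rw [hs2]; ring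
      _ = s ^ 2 * ((X 0 ^ 2 * Y 0 ^ 3) * (X 1 ^ 2 * Y 1 ^ 3)) := by ring
      _ ≤ s ^ 2 * ((32 * B) * (32 * B)) := by gcongr
      _ = _ := by ring
  obtain ⟨E, hE⟩ : ∃ E : ℝ, E = B ^ ε := ⟨_, rfl⟩
  have hE1 : 1 ≤ E := by rw [hE]; exact Real.one_le_rpow hB1 hε.le
  have hY2p : 0 < Y 2 := hY0 2
  have htarget : (32 * C0 + 1536 + 32 * 729) * (Y 0 * Y 1) ^ (-(3 : ℝ) / 2) * Y 2 ^ (-3 : ℝ) *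
      R ^ 7 * B ^ (2 + ε) = (32 * C0 + 1536 + 32 * 729) * (s * R ^ 7 * B ^ 2 / Y 2 ^ 3) * E := by
    rw [← hs, Real.rpow_add hB0, ← hE, Real.rpow_neg hY2p.le]
    have e1 : Y 2 ^ (3 : ℝ) = Y 2 ^ 3 := by exact_mod_cast Real.rpow_natCast (Y 2) 3
    have e2 : B ^ (2 : ℝ) = B ^ 2 := by exact_mod_cast Real.rpow_natCast B 2
    rw [e1, e2]
    field_simp
  rw [htarget]
  obtain ⟨T, hT⟩ : ∃ T : ℝ, T = s * R ^ 7 * B ^ 2 / Y 2 ^ 3 := ⟨_, rfl⟩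
  have hT0 : 0 < T := by rw [hT]; positivity
  rw [← hT]
  change (({t | EkLem.Cd (a 0) (a 1) (X 0) (X 1) (Y 0) (Y 1) (Y 2) R t}.ncard : ℕ) : ℝ) ≤ _
  by_cases hfin : {t | EkLem.Cd (a 0) (a 1) (X 0) (X 1) (Y 0) (Y 1) (Y 2) R t}.Finite
  swap
  · rw [Set.Infinite.ncard hfin]
    push_cast
    positivity
  rw [Set.ncard_eq_toFinset_card _ hfin]
  obtain ⟨S, hSdef⟩ : ∃ S, S = hfin.toFinset := ⟨_, rfl⟩
  rw [← hSdef]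
  have hS : ∀ t ∈ S, EkLem.Cd (a 0) (a 1) (X 0) (X 1) (Y 0) (Y 1) (Y 2) R t := by
    intro t ht
    rw [hSdef, Set.Finite.mem_toFinset] at ht
    exact ht
  have hTE : T ≤ T * E := le_mul_of_one_le_right hT0.le hE1
  rcases le_or_gt R B with hRB | hRB
  · -- main range
    classical
    have hsplit : S.card ≤ (S.filter (fun t => t.1.1 ≠ 0 ∧ t.1.2.1 ≠ 0)).card +
        ((S.filter (fun t => t.1.1 = 0)).card + (S.filter (fun t => t.1.2.1 = 0)).card) := by
      refine le_trans (Finset.card_le_card (t := S.filter (fun t => t.1.1 ≠ 0 ∧ t.1.2.1 ≠ 0) ∪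
        (S.filter (fun t => t.1.1 = 0) ∪ S.filter (fun t => t.1.2.1 = 0))) ?_) ?_
      · intro t ht
        simp only [Finset.mem_union, Finset.mem_filter]
        tauto
      · refine (Finset.card_union_le _ _).trans ?_
        gcongr
        exact Finset.card_union_le _ _
    have hm := hmain (a 0) (a 1) (X 0) (X 1) (Y 0) (Y 1) (Y 2) B R hB (ha 0) (ha 1) (hX1 0) (hX1 1)
      (hY1 0) (hY1 1) (hY1 2) (hXleB 0) (hXleB 1) (hYleB 0) (hYleB 1) (hYleB 2) (haXY' 0) (haXY' 1)
      hR hRB (S.filter (fun t => t.1.1 ≠ 0 ∧ t.1.2.1 ≠ 0)) (by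
        intro t ht
        obtain ⟨h1, h2⟩ := Finset.mem_filter.1 ht
        exact ⟨hS t h1, h2⟩)
    have hm' : C0 * (X 0 * X 1 * B * R ^ 7 / Y 2 ^ 3) * B ^ ε ≤ 32 * C0 * T * E := by
      rw [← hE]
      have h1 : X 0 * X 1 * B * R ^ 7 / Y 2 ^ 3 ≤ 32 * T := by
        calc X 0 * X 1 * B * R ^ 7 / Y 2 ^ 3 ≤ (32 * B * s) * B * R ^ 7 / Y 2 ^ 3 := by gcongr
          _ = 32 * T := by rw [hT]; ring
      calc _ ≤ C0 * (32 * T) * E := by gcongr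
        _ = _ := by ring
    have hT360 : T = s * R ^ 7 * β ^ 360 / Y 2 ^ 3 := by
      rw [hT, ← hβ180]; ring
    have hd1 : ((S.filter (fun t => t.1.1 = 0)).card : ℝ) ≤ 768 * T := by
      rcases (S.filter (fun t => t.1.1 = 0)).eq_empty_or_nonempty with he | ⟨t₀, ht₀⟩
      · rw [he]; simp; positivity
      have hmem : ∀ t ∈ S.filter (fun t => t.1.1 = 0), t.1.1 = 0 ∧
          EkLem.Cd (a 0) (a 1) (X 0) (X 1) (Y 0) (Y 1) (Y 2) R t ∧
          t.1.2.1 ≠ 0 ∧ t.1.2.2.2 ≠ 0 ∧ t.2.1 ∣ t.1.2.1 := by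
        intro t ht
        obtain ⟨h1, h2⟩ := Finset.mem_filter.1 ht
        have hc := hS t h1
        obtain ⟨_, _, _, c4, _, _, c7, c8, c9, _⟩ := hS t h1
        refine ⟨h2, hc, ?_, ?_, ?_⟩
        · intro h0; apply c8; rw [h2, h0]; ring
        · intro h0; apply c8; rw [h2, h0]; ring
        · have h3 := c9.1
          rw [h2] at h3
          have h4 : IsCoprime t.2.1 (-(t.2.2 ^ 3 * a 0)) :=
            (((c7.symm).pow_right).mul_right c4.of_mul_right_left).neg_right
          apply h4.dvd_of_dvd_mul_left
          rw [show -(t.2.2 ^ 3 * a 0) * t.1.2.1 = a 1 * 0 - t.2.2 ^ 3 * a 0 * t.1.2.1 by ring]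
          exact h3
      have hcount := EkLem.deg_count (S.filter (fun t => t.1.1 = 0)) (fun t => t.1.2.1)
        (fun t => t.1.2.2.2) (fun t => t.1.2.2.1) (fun t => t.2.1) (fun t => t.2.2)
        (hX0 1) (hY0 1) (hY0 0) (hY0 2) hR (by
          intro t ht
          obtain ⟨h1, hc, h2, h3, h4⟩ := hmem t ht
          obtain ⟨_, c2, c3, _, c5, c6, _, _, _, c10, c11, c12, c13⟩ := hc
          exact ⟨c2, c3, c5, c6, h2, h4, c11, h3, c13, c12⟩) (by
          intro t ht t' ht' e1 e2 e3
          obtain ⟨_, hc, _⟩ := hmem t ht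
          obtain ⟨_, hc', _⟩ := hmem t' ht'
          obtain ⟨_, _, _, c4, _, _, c7, c8, c9, _⟩ := hc
          obtain ⟨_, _, _, _, _, _, _, _, d9, _⟩ := hc'
          have d := d9.2.1
          rw [← e1, ← e2, ← e3] at d
          have h4 : IsCoprime t.2.1 (t.2.2 ^ 2 * a 0) :=
            ((c7.symm).pow_right).mul_right c4.of_mul_right_left
          apply h4.dvd_of_dvd_mul_left
          have := dvd_sub d c9.2.1
          rwa [show t.2.2 ^ 2 * a 0 * t'.1.2.2.1 + a 1 * t.1.2.2.2 -
            (t.2.2 ^ 2 * a 0 * t.1.2.2.1 + a 1 * t.1.2.2.2) =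
            t.2.2 ^ 2 * a 0 * (t'.1.2.2.1 - t.1.2.2.1) by ring] at this) (by
          intro t ht t' ht' e1 e2 e3 e4 e5
          have z1 := (hmem t ht).1
          have z2 := (hmem t' ht').1
          ext
          · rw [z1, z2]
          · exact e1
          · exact e3
          · exact e2
          · exact e4
          · exact e5)
      refine hcount.trans ?_
      rw [hT360]
      refine EkLem.deg_compare hβ hsβ (hX1 1) (hY1 1) (hY1 0) (hXu 1) (hYu 1) (hYu 0) (hYl 2) hR ?_
      obtain ⟨_, hc, h2, _, h4⟩ := hmem t₀ ht₀
      have h5 : |t₀.2.1| ≤ |t₀.1.2.1| := Int.le_of_dvd (abs_pos.2 h2) ((abs_dvd_abs _ _).2 h4)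
      have h6 : |(t₀.2.1 : ℝ)| ≤ |(t₀.1.2.1 : ℝ)| := by exact_mod_cast h5
      have h7 := le_abs_self (t₀.2.1 : ℝ)
      have h8 := hc.2.1
      have h9 := hc.2.2.2.2.2.2.2.2.2.2.1
      linarith
    have hd2 : ((S.filter (fun t => t.1.2.1 = 0)).card : ℝ) ≤ 768 * T := by
      rcases (S.filter (fun t => t.1.2.1 = 0)).eq_empty_or_nonempty with he | ⟨t₀, ht₀⟩
      · rw [he]; simp; positivity
      have hmem : ∀ t ∈ S.filter (fun t => t.1.2.1 = 0), t.1.2.1 = 0 ∧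
          EkLem.Cd (a 0) (a 1) (X 0) (X 1) (Y 0) (Y 1) (Y 2) R t ∧
          t.1.1 ≠ 0 ∧ t.1.2.2.1 ≠ 0 ∧ t.2.1 ∣ t.1.1 := by
        intro t ht
        obtain ⟨h1, h2⟩ := Finset.mem_filter.1 ht
        have hc := hS t h1
        obtain ⟨_, _, _, c4, _, _, c7, c8, c9, _⟩ := hS t h1
        refine ⟨h2, hc, ?_, ?_, ?_⟩
        · intro h0; apply c8; rw [h2, h0]; ring
        · intro h0; apply c8; rw [h2, h0]; ring
        · have h3 := c9.1
          rw [h2] at h3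
          apply (c4.of_mul_right_right).dvd_of_dvd_mul_left
          rw [show a 1 * t.1.1 = a 1 * t.1.1 - t.2.2 ^ 3 * a 0 * 0 by ring]
          exact h3
      have hcount := EkLem.deg_count (S.filter (fun t => t.1.2.1 = 0)) (fun t => t.1.1)
        (fun t => t.1.2.2.1) (fun t => t.1.2.2.2) (fun t => t.2.1) (fun t => t.2.2)
        (hX0 0) (hY0 0) (hY0 1) (hY0 2) hR (by
          intro t ht
          obtain ⟨h1, hc, h2, h3, h4⟩ := hmem t ht
          obtain ⟨_, c2, c3, _, c5, c6, _, _, _, c10, c11, c12, c13⟩ := hc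
          exact ⟨c2, c3, c5, c6, h2, h4, c10, h3, c12, c13⟩) (by
          intro t ht t' ht' e1 e2 e3
          obtain ⟨_, hc, _⟩ := hmem t ht
          obtain ⟨_, hc', _⟩ := hmem t' ht'
          obtain ⟨_, _, _, c4, _, _, c7, c8, c9, _⟩ := hc
          obtain ⟨_, _, _, _, _, _, _, _, d9, _⟩ := hc'
          have d := d9.2.1
          rw [← e1, ← e2, ← e3] at d
          apply (c4.of_mul_right_right).dvd_of_dvd_mul_left
          have := dvd_sub d c9.2.1
          rwa [show t.2.2 ^ 2 * a 0 * t.1.2.2.1 + a 1 * t'.1.2.2.2 -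
            (t.2.2 ^ 2 * a 0 * t.1.2.2.1 + a 1 * t.1.2.2.2) =
            a 1 * (t'.1.2.2.2 - t.1.2.2.2) by ring] at this) (by
          intro t ht t' ht' e1 e2 e3 e4 e5
          have z1 := (hmem t ht).1
          have z2 := (hmem t' ht').1
          ext
          · exact e1
          · rw [z1, z2]
          · exact e2
          · exact e3
          · exact e4
          · exact e5)
      refine hcount.trans ?_
      rw [hT360]
      refine EkLem.deg_compare hβ hsβ (hX1 0) (hY1 0) (hY1 1) (hXu 0) (hYu 0) (hYu 1) (hYl 2) hR ?_
      obtain ⟨_, hc, h2, _, h4⟩ := hmem t₀ ht₀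
      have h5 : |t₀.2.1| ≤ |t₀.1.1| := Int.le_of_dvd (abs_pos.2 h2) ((abs_dvd_abs _ _).2 h4)
      have h6 : |(t₀.2.1 : ℝ)| ≤ |(t₀.1.1 : ℝ)| := by exact_mod_cast h5
      have h7 := le_abs_self (t₀.2.1 : ℝ)
      have h8 := hc.2.1
      have h9 := hc.2.2.2.2.2.2.2.2.2.1
      linarith
    have hsr : (S.card : ℝ) ≤ ((S.filter (fun t => t.1.1 ≠ 0 ∧ t.1.2.1 ≠ 0)).card : ℝ) +
        (((S.filter (fun t => t.1.1 = 0)).card : ℝ) +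
        ((S.filter (fun t => t.1.2.1 = 0)).card : ℝ)) := by
      exact_mod_cast hsplit
    have hfinal : (32 * C0 + 1536 + 32 * 729) * T * E =
        32 * C0 * T * E + 1536 * (T * E) + 32 * 729 * (T * E) := by ring
    rw [hfinal]
    linarith
  · -- large `R`
    have h1 := EkLem.triv_count (hX1 0) (hX1 1) (hY1 0) (hY1 1) (hY1 2)
      (by linarith : 1 ≤ R) S hS
    have hY5 : Y 0 * Y 1 * Y 2 ^ 5 ≤ R ^ 3 * B := by
      calc Y 0 * Y 1 * Y 2 ^ 5 ≤ β ^ 38 * β ^ 38 * (β ^ 38) ^ 5 := by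
            have h0 := hYu 0
            have h1 := hYu 1
            have h2 := hYu 2
            have h3 := hY0 0
            have h4 := hY0 1
            gcongr
        _ = β ^ 266 := by ring
        _ ≤ β ^ 720 := pow_le_pow_right₀ hβ (by norm_num)
        _ = B ^ 3 * B := by rw [← hβ180]; ring
        _ ≤ R ^ 3 * B := by gcongr
    have h2 : 729 * R ^ 4 * X 0 * X 1 * Y 0 * Y 1 * Y 2 ^ 2 ≤ 32 * 729 * T := by
      rw [hT, ← mul_div_assoc, le_div_iff₀ (by positivity)]
      calc 729 * R ^ 4 * X 0 * X 1 * Y 0 * Y 1 * Y 2 ^ 2 * Y 2 ^ 3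
          = 729 * R ^ 4 * ((X 0 * X 1) * (Y 0 * Y 1 * Y 2 ^ 5)) := by ring
        _ ≤ 729 * R ^ 4 * ((32 * B * s) * (R ^ 3 * B)) := by
          have h3 := hX0 0
          have h4 := hX0 1
          have h5 := hY0 0
          have h6 := hY0 1
          gcongr
        _ = _ := by ring
    have hfinal : (32 * C0 + 1536 + 32 * 729) * T * E =
        32 * C0 * T * E + 1536 * (T * E) + 32 * 729 * (T * E) := by ring
    have h3 : 0 ≤ 32 * C0 * T * E := by positivity
    have h4 : 0 ≤ T * E := by positivity
    rw [hfinal]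
    linarith
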